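/- arXiv:1804.06104 — 7 statements merged into one kernel-verified Lean document; each statement's English description precedes it below -/
import Mathlib

section
/- Let G be a finite simple graph with maximum degree Δ and no isolated edge, and let d be a positive integer with 2(d−1) < Δ. Then G has a proper edge colouring c using at most Δ + 2 colours such that, for every edge uv of G with the property that the set of vertices w ∈ N(u) ∪ N(v) of degree strictly less than d is exactly {u, v}, one has S_c(u) ∩ S_c(v) = {c(uv)}. -/
/-- A proper edge colouring: distinct incident edges of `G` get distinct colours. -/
def ProperEdgeColoring {V : Type*} (G : SimpleGraph V) (c : Sym2 V → ℕ) : Prop :=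
  ∀ e₁ ∈ G.edgeSet, ∀ e₂ ∈ G.edgeSet, e₁ ≠ e₂ → (∃ v, v ∈ e₁ ∧ v ∈ e₂) → c e₁ ≠ c e₂

/-- `colorSet G c u` is the set of colours appearing on edges incident to `u`. -/
def colorSet {V : Type*} (G : SimpleGraph V) (c : Sym2 V → ℕ) (u : V) : Set ℕ :=
  {n | ∃ v, G.Adj u v ∧ c s(u, v) = n}

/-!
The special edges form an induced matching: a vertex of degree less than `d` adjacent to an end of
`uv` is `u` or `v`. Move all edges at one end of each special edge to its other end. The special
edge becomes pendant, so a proper colouring of the resulting multigraph is exactly a proper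
colouring of `G` in which the two ends of every special edge share no other colour. A merged vertex
has degree at most `2(d - 1) ≤ Δ`, and since no edge joins two special edges, at most two edges are
parallel. So Vizing's theorem for multigraphs gives `Δ + 2` colours.

For Vizing's theorem, take a proper partial colouring with as few uncoloured edges as possible, and
suppose that `e₀` is uncoloured. Around an end `v` of `e₀` consider the edges reachable by fan
steps. Shifting colours along the fan shows that no far end of a fan edge misses a colour missing at
`v`, and a Kempe change shows that two distinct far ends do not miss a common colour. Every colour
missing at a far end therefore appears on its own fan edge other than `e₀`, and counting these
colours contradicts the bound on degree plus multiplicity.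
-/

open Finset Function Relation

section VizingOre

variable {E W K : Type*} {ends : E → Sym2 W} {c : E → Option K}

section PartialColoring

/-- A partial edge colouring (`none` means uncoloured) in which edges sharing an endpoint never
receive the same colour. The multigraph is encoded by the map `ends` from edges to unordered pairs
of vertices, so parallel edges are allowed. -/
def IsProperPartial (ends : E → Sym2 W) (c : E → Option K) : Prop :=
  ∀ ⦃e f w a⦄, w ∈ ends e → w ∈ ends f → c e = some a → c f = some a → e = f

/-- The colour `a` is missing at the vertex `w`: no edge at `w` has colour `a`. -/
def Misses (ends : E → Sym2 W) (c : E → Option K) (w : W) (a : K) : Prop :=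
  ∀ e, w ∈ ends e → c e ≠ some a

lemma Misses.update_none [DecidableEq E] {w : W} {a : K} (h : Misses ends c w a) (f : E) :
    Misses ends (update c f none) w a := by
  intro g hg
  obtain rfl | hne := eq_or_ne g f
  · simp
  · simpa [hne] using h g hg

lemma Misses.update_some [DecidableEq E] {w : W} {a b : K} (h : Misses ends c w b) (hab : a ≠ b)
    (e : E) : Misses ends (update c e (some a)) w b := by
  intro g hg
  obtain rfl | hne := eq_or_ne g e
  · simpa using hab
  · simpa [hne] using h g hg

lemma IsProperPartial.update_none [DecidableEq E] (h : IsProperPartial ends c) (f : E) :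
    IsProperPartial ends (update c f none) := by
  intro g g' w a hg hg' hga hga'
  have hgf : g ≠ f := by rintro rfl; simp at hga
  have hgf' : g' ≠ f := by rintro rfl; simp at hga'
  rw [update_of_ne hgf] at hga
  rw [update_of_ne hgf'] at hga'
  exact h hg hg' hga hga'

lemma IsProperPartial.update_some [DecidableEq E] (h : IsProperPartial ends c) {e : E}
    {a : K} (hmiss : ∀ w ∈ ends e, Misses ends c w a) :
    IsProperPartial ends (update c e (some a)) := by
  have not_both : ∀ ⦃g w b⦄, w ∈ ends e → w ∈ ends g → g ≠ e →
      update c e (some a) e = some b → update c e (some a) g ≠ some b := by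
    intro g w b he hg hne heb
    obtain rfl : a = b := by simpa using heb
    rw [update_of_ne hne]
    exact hmiss w he g hg
  intro g g' w b hg hg' hgb hgb'
  obtain rfl | hne := eq_or_ne g e
  · by_contra hgg'
    exact not_both hg hg' (Ne.symm hgg') hgb hgb'
  obtain rfl | hne' := eq_or_ne g' e
  · exact absurd hgb (not_both hg' hg hne hgb')
  · rw [update_of_ne hne] at hgb
    rw [update_of_ne hne'] at hgb'
    exact h hg hg' hgb hgb'

variable [Fintype E]

/-- The set of edges left uncoloured by a partial edge colouring. -/
noncomputable def uncolored (c : E → Option K) : Finset E := {e | c e = none}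

lemma mem_uncolored {e : E} : e ∈ uncolored c ↔ c e = none := by simp [uncolored]

lemma uncolored_update_none [DecidableEq E] (f : E) :
    uncolored (update c f none) = insert f (uncolored c) := by
  ext g
  obtain rfl | hne := eq_or_ne g f <;> simp [mem_uncolored, *]

lemma uncolored_update_some [DecidableEq E] (e : E) (a : K) :
    uncolored (update c e (some a)) = (uncolored c).erase e := by
  ext g
  obtain rfl | hne := eq_or_ne g e <;> simp [mem_uncolored, *]

/-- A proper partial edge colouring leaving as few edges as possible uncoloured. -/
structure IsOptimal (ends : E → Sym2 W) (c : E → Option K) : Prop where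
  proper : IsProperPartial ends c
  card_le : ∀ c' : E → Option K, IsProperPartial ends c' → #(uncolored c) ≤ #(uncolored c')

lemma exists_isOptimal (ends : E → Sym2 W) (K : Type*) : ∃ c : E → Option K, IsOptimal ends c := by
  have hempty : IsProperPartial ends (fun _ ↦ none : E → Option K) := by simp [IsProperPartial]
  let s : Set (E → Option K) := {c | IsProperPartial ends c}
  have hs : s.Nonempty := ⟨_, hempty⟩
  obtain ⟨c, hc, hmin⟩ := (measure fun c : E → Option K ↦ #(uncolored c)).wf.has_min s hs
  exact ⟨c, hc, fun c' hc' ↦ not_lt.1 (hmin c' hc')⟩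

lemma IsOptimal.of_card_eq (h : IsOptimal ends c) {c' : E → Option K}
    (hc' : IsProperPartial ends c') (hcard : #(uncolored c') = #(uncolored c)) :
    IsOptimal ends c' :=
  ⟨hc', fun c'' hc'' ↦ hcard.trans_le (h.card_le c'' hc'')⟩

lemma IsOptimal.exists_not_misses (h : IsOptimal ends c) {e : E} (he : c e = none) (a : K) :
    ∃ w ∈ ends e, ¬ Misses ends c w a := by
  classical
  by_contra! hmiss
  have hle := h.card_le _ (h.proper.update_some hmiss)
  rw [uncolored_update_some] at hle
  exact hle.not_gt (card_erase_lt_of_mem (mem_uncolored.2 he))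

end PartialColoring

section Fan

open Classical in
/-- The endpoint of `e` other than `v`; the junk value `v` if `v` is not an endpoint of `e`. -/
noncomputable def otherEnd (ends : E → Sym2 W) (v : W) (e : E) : W :=
  if h : v ∈ ends e then Sym2.Mem.other h else v

lemma ends_eq_of_mem {v : W} {e : E} (h : v ∈ ends e) : ends e = s(v, otherEnd ends v e) := by
  rw [otherEnd, dif_pos h, Sym2.other_spec]

/-- The step relation of Vizing fans at `v`: the edge `f` at `v` may follow the edge `e` if the
colour of `f` is missing at the far end of `e`. -/
def FanStep (ends : E → Sym2 W) (c : E → Option K) (v : W) (e f : E) : Prop :=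
  v ∈ ends f ∧ ∃ a, c f = some a ∧ Misses ends c (otherEnd ends v e) a

open Classical in
/-- The colouring obtained from `c` by moving the colour `a` from the edge `f` to the edge `e`. -/
noncomputable def shiftColor (c : E → Option K) (e f : E) (a : K) : E → Option K :=
  update (update c f none) e (some a)

variable {v : W} {e₀ e f : E} {α β a : K}

lemma Misses.shift {w : W} {b : K} (h : Misses ends c w b) (hab : a ≠ b) (e f : E) :
    Misses ends (shiftColor c e f a) w b := by
  classical
  exact (h.update_none f).update_some hab e

/-- The last time a walk visits its starting point, it leaves it for good. -/
lemma reflTransGen_and_ne_start {A : Type*} {r : A → A → Prop} {x y : A}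
    (h : ReflTransGen r x y) : ReflTransGen (fun u w ↦ r u w ∧ w ≠ x) x y := by
  induction h with
  | refl => exact .refl
  | @tail u w _ huw ih =>
    obtain rfl | hne := eq_or_ne w x
    · exact .refl
    · exact ih.tail ⟨huw, hne⟩

lemma mem_ends_of_fan (hv : v ∈ ends e₀) (h : ReflTransGen (FanStep ends c v) e₀ e) :
    v ∈ ends e := by
  obtain rfl | ⟨_, _, hstep⟩ := h.cases_tail
  exacts [hv, hstep.1]

variable [Fintype E]

lemma IsOptimal.shift (h : IsOptimal ends c) (hv : v ∈ ends e) (he : c e = none)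
    (hvf : v ∈ ends f) (hf : c f = some a) (hmiss : Misses ends c (otherEnd ends v e) a) :
    IsOptimal ends (shiftColor c e f a) := by
  classical
  refine h.of_card_eq ((h.proper.update_none f).update_some fun w hw ↦ ?_) ?_
  · rw [ends_eq_of_mem hv, Sym2.mem_iff] at hw
    obtain rfl | rfl := hw
    · intro g hg hga
      have hgf : g ≠ f := by rintro rfl; simp at hga
      rw [update_of_ne hgf] at hga
      exact hgf (h.proper hg hvf hga hf)
    · exact hmiss.update_none f
  · have hf' : f ∉ uncolored c := by simp [mem_uncolored, hf]
    have he' : e ∈ insert f (uncolored c) := mem_insert_of_mem (mem_uncolored.2 he)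
    rw [shiftColor, uncolored_update_some, uncolored_update_none, card_erase_of_mem he',
      card_insert_of_notMem hf', Nat.add_sub_cancel]

/-- Shift the colours along the fan towards `e₀`; this uncolours `e`, which could then be coloured
`α`. The set `A` of edges still available to the walk makes the induction well-founded and ensures
that the shifts made so far do not affect the rest of the fan. -/
lemma IsOptimal.not_misses_of_fan_within (A : Finset E) (h : IsOptimal ends c)
    (h₀ : c e₀ = none) (hv : v ∈ ends e₀) (h₀A : e₀ ∉ A)
    (hfan : ReflTransGen (fun g f ↦ FanStep ends c v g f ∧ f ∈ A) e₀ e)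
    (hα : Misses ends c v α) : ¬ Misses ends c (otherEnd ends v e) α := by
  classical
  induction A using Finset.strongInduction generalizing c e₀ with
  | H A ih =>
  intro hα'
  obtain rfl | ⟨e₁, ⟨⟨hv₁, a, ha, hmiss⟩, he₁A⟩, hrest⟩ := hfan.cases_head
  · obtain ⟨w, hw, hwα⟩ := h.exists_not_misses h₀ α
    rw [ends_eq_of_mem hv, Sym2.mem_iff] at hw
    obtain rfl | rfl := hw
    exacts [hwα hα, hwα hα']
  have haα : a ≠ α := by rintro rfl; exact hα e₁ hv₁ ha
  have h₁₀ : e₁ ≠ e₀ := ne_of_mem_of_not_mem he₁A h₀A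
  have hfan' : ReflTransGen
      (fun g f ↦ FanStep ends (shiftColor c e₀ e₁ a) v g f ∧ f ∈ A.erase e₁) e₁ e := by
    refine ReflTransGen.mono ?_ _ _ (reflTransGen_and_ne_start hrest)
    rintro g f ⟨⟨⟨hvf, b, hb, hmissb⟩, hfA⟩, hf₁⟩
    have hf₀ : f ≠ e₀ := ne_of_mem_of_not_mem hfA h₀A
    have hab : a ≠ b := by rintro rfl; exact hf₁ (h.proper hvf hv₁ hb ha)
    exact ⟨⟨hvf, b, by simp [shiftColor, hf₀, hf₁, hb], hmissb.shift hab e₀ e₁⟩,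
      mem_erase.2 ⟨hf₁, hfA⟩⟩
  exact ih _ (erase_ssubset he₁A) (h.shift hv h₀ hv₁ ha hmiss) (by simp [shiftColor, h₁₀]) hv₁
    (notMem_erase e₁ A) hfan' (hα.shift haα e₀ e₁) (hα'.shift haα e₀ e₁)

lemma IsOptimal.not_misses_of_fan (h : IsOptimal ends c) (h₀ : c e₀ = none) (hv : v ∈ ends e₀)
    (hfan : ReflTransGen (FanStep ends c v) e₀ e) (hα : Misses ends c v α) :
    ¬ Misses ends c (otherEnd ends v e) α := by
  classical
  have hfan' := reflTransGen_and_ne_start hfan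
  refine h.not_misses_of_fan_within (univ.erase e₀) h₀ hv (notMem_erase e₀ univ) ?_ hα
  simpa only [mem_erase, mem_univ, and_true] using hfan'

end Fan

section Kempe

/-- A set `C` of vertices which is a union of components of the subgraph of edges coloured `α` or
`β`. -/
def KempeClosed (ends : E → Sym2 W) (c : E → Option K) (α β : K) (C : Set W) : Prop :=
  ∀ e, (c e = some α ∨ c e = some β) → ∀ w ∈ ends e, ∀ w' ∈ ends e, w ∈ C → w' ∈ C

open Classical in
/-- The Kempe change exchanging the colours `α` and `β` on all edges meeting `C`. -/
noncomputable def kempeSwap (ends : E → Sym2 W) (c : E → Option K) (α β : K) (C : Set W) :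
    E → Option K :=
  fun e ↦ if ∃ w ∈ ends e, w ∈ C then (c e).map (Equiv.swap α β) else c e

variable {v w : W} {e₀ e f : E} {α β a : K} {C : Set W}

open Classical in
lemma kempeSwap_eq_some_iff (hw : w ∈ ends e) (hC : w ∈ C) :
    kempeSwap ends c α β C e = some a ↔ c e = some (Equiv.swap α β a) := by
  rw [kempeSwap, if_pos ⟨w, hw, hC⟩]
  cases c e with
  | none => simp
  | some b => simp [Equiv.swap_apply_eq_iff]

lemma KempeClosed.kempeSwap_of_notMem (hcl : KempeClosed ends c α β C) (hw : w ∈ ends e)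
    (hC : w ∉ C) : kempeSwap ends c α β C e = c e := by
  classical
  rw [kempeSwap, ite_eq_right_iff]
  rintro ⟨w', hw', hC'⟩
  cases hce : c e with
  | none => rfl
  | some a =>
    have ha : a ≠ α := by rintro rfl; exact hC (hcl e (.inl hce) w' hw' w hw hC')
    have hb : a ≠ β := by rintro rfl; exact hC (hcl e (.inr hce) w' hw' w hw hC')
    rw [Option.map_some, Equiv.swap_apply_of_ne_of_ne ha hb]

open Classical in
lemma misses_kempeSwap_iff (hC : w ∈ C) :
    Misses ends (kempeSwap ends c α β C) w a ↔ Misses ends c w (Equiv.swap α β a) :=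
  forall₂_congr fun _ he ↦ not_congr (kempeSwap_eq_some_iff he hC)

lemma KempeClosed.misses_kempeSwap_iff (hcl : KempeClosed ends c α β C) (hC : w ∉ C) :
    Misses ends (kempeSwap ends c α β C) w a ↔ Misses ends c w a :=
  forall₂_congr fun _ he ↦ by rw [hcl.kempeSwap_of_notMem he hC]

lemma KempeClosed.isProperPartial_kempeSwap (hcl : KempeClosed ends c α β C)
    (h : IsProperPartial ends c) : IsProperPartial ends (kempeSwap ends c α β C) := by
  classical
  intro g g' w a hg hg' hga hga'
  by_cases hC : w ∈ C
  · rw [kempeSwap_eq_some_iff hg hC] at hga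
    rw [kempeSwap_eq_some_iff hg' hC] at hga'
    exact h hg hg' hga hga'
  · rw [hcl.kempeSwap_of_notMem hg hC] at hga
    rw [hcl.kempeSwap_of_notMem hg' hC] at hga'
    exact h hg hg' hga hga'

lemma uncolored_kempeSwap [Fintype E] (C : Set W) :
    uncolored (kempeSwap ends c α β C) = uncolored c := by
  ext e
  rw [mem_uncolored, mem_uncolored, kempeSwap]
  split_ifs <;> simp

lemma IsOptimal.kempeSwap [Fintype E] (h : IsOptimal ends c) (hcl : KempeClosed ends c α β C) :
    IsOptimal ends (kempeSwap ends c α β C) :=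
  h.of_card_eq (hcl.isProperPartial_kempeSwap h.proper) (by rw [uncolored_kempeSwap])

/-- As long as the far ends of a fan that miss `β` avoid `C`, the fan survives the Kempe change on
`C`; if one of them lay in `C`, it would miss `α` after the change, just as `v` does. -/
lemma IsOptimal.otherEnd_notMem_of_fan [Fintype E] (h : IsOptimal ends c) (h₀ : c e₀ = none)
    (hv : v ∈ ends e₀) (hα : Misses ends c v α) (hcl : KempeClosed ends c α β C) (hvC : v ∉ C)
    (hfan : ReflTransGen (FanStep ends c v) e₀ e) (hβ : Misses ends c (otherEnd ends v e) β) :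
    otherEnd ends v e ∉ C := by
  classical
  set c' := _root_.kempeSwap ends c α β C with hc'
  have h₀' : c' e₀ = none := by rwa [hc', hcl.kempeSwap_of_notMem hv hvC]
  have hα' : Misses ends c' v α := (hcl.misses_kempeSwap_iff hvC).2 hα
  have notMem_of_fan : ∀ g, ReflTransGen (FanStep ends c' v) e₀ g →
      Misses ends c (otherEnd ends v g) β → otherEnd ends v g ∉ C := by
    intro g hg hgβ hgC
    refine (h.kempeSwap hcl).not_misses_of_fan h₀' hv hg hα' ?_
    rwa [misses_kempeSwap_iff hgC, Equiv.swap_apply_left]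
  have hfan' : ReflTransGen (FanStep ends c' v) e₀ e := by
    clear hβ
    induction hfan with
    | refl => exact .refl
    | @tail x z _ hstep ih =>
      obtain ⟨hvz, b, hb, hmiss⟩ := hstep
      refine ih.tail ⟨hvz, b, by rwa [hc', hcl.kempeSwap_of_notMem hvz hvC], ?_⟩
      by_cases hxC : otherEnd ends v x ∈ C
      · have hbα : b ≠ α := by rintro rfl; exact hα z hvz hb
        have hbβ : b ≠ β := by rintro rfl; exact notMem_of_fan x ih hmiss hxC
        rwa [misses_kempeSwap_iff hxC, Equiv.swap_apply_of_ne_of_ne hbα hbβ]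
      · rwa [hcl.misses_kempeSwap_iff hxC]
  exact notMem_of_fan e hfan' hβ

/-- The vertices of a multigraph, joined by the edges coloured `α` or `β`: the components of this
graph are the Kempe chains. -/
def kempeGraph (ends : E → Sym2 W) (c : E → Option K) (α β : K) : SimpleGraph W :=
  .fromEdgeSet (ends '' {e | c e = some α ∨ c e = some β})

lemma kempeClosed_setOf_not_reachable (ends : E → Sym2 W) (c : E → Option K) (α β : K) (v : W) :
    KempeClosed ends c α β {w | ¬ (kempeGraph ends c α β).Reachable v w} := by
  intro e he w hw w' hw' hvw hvw'
  obtain rfl | hne := eq_or_ne w w'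
  · exact hvw hvw'
  · have hadj : (kempeGraph ends c α β).Adj w' w :=
      (SimpleGraph.fromEdgeSet_adj _).2
        ⟨⟨e, he, (Sym2.mem_and_mem_iff hne.symm).1 ⟨hw', hw⟩⟩, hne.symm⟩
    exact hvw (hvw'.trans hadj.reachable)

lemma IsOptimal.reachable_otherEnd_of_fan [Fintype E] (h : IsOptimal ends c) (h₀ : c e₀ = none)
    (hv : v ∈ ends e₀) (hα : Misses ends c v α) (hfan : ReflTransGen (FanStep ends c v) e₀ e)
    (hβ : Misses ends c (otherEnd ends v e) β) :
    (kempeGraph ends c α β).Reachable v (otherEnd ends v e) :=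
  not_not.1 <| h.otherEnd_notMem_of_fan h₀ hv hα (kempeClosed_setOf_not_reachable ends c α β v)
    (not_not.2 .rfl) hfan hβ

open Classical in
lemma IsProperPartial.degree_kempeGraph_le [Fintype W] (h : IsProperPartial ends c) (α β : K)
    (w : W) : (kempeGraph ends c α β).degree w ≤
      #{a ∈ ({α, β} : Finset K) | ¬ Misses ends c w a} := by
  rw [← SimpleGraph.card_neighborFinset_eq_degree]
  refine card_le_card_of_forall_subsingleton (fun u a ↦ ∃ e, ends e = s(w, u) ∧ c e = some a) ?_ ?_
  · intro u hu
    rw [SimpleGraph.mem_neighborFinset, kempeGraph, SimpleGraph.fromEdgeSet_adj] at hu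
    obtain ⟨⟨e, he, hends⟩, -⟩ := hu
    obtain ⟨a, ha, hea⟩ : ∃ a ∈ ({α, β} : Finset K), c e = some a := by simpa using he
    have hw : w ∈ ends e := hends ▸ Sym2.mem_mk_left w u
    exact ⟨a, mem_filter.2 ⟨ha, fun hmiss ↦ hmiss e hw hea⟩, e, hends, hea⟩
  · rintro a - u₁ ⟨-, e₁, h₁, ha₁⟩ u₂ ⟨-, e₂, h₂, ha₂⟩
    obtain rfl : e₁ = e₂ :=
      h (h₁ ▸ Sym2.mem_mk_left w u₁) (h₂ ▸ Sym2.mem_mk_left w u₂) ha₁ ha₂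
    exact Sym2.congr_right.1 (h₁.symm.trans h₂)

open Classical in
lemma IsProperPartial.degree_kempeGraph_le_two [Fintype W] (h : IsProperPartial ends c) (α β : K)
    (w : W) : (kempeGraph ends c α β).degree w ≤ 2 :=
  (h.degree_kempeGraph_le α β w).trans ((card_filter_le _ _).trans card_le_two)

open Classical in
lemma IsProperPartial.degree_kempeGraph_le_one [Fintype W] (h : IsProperPartial ends c)
    (ha : a = α ∨ a = β) (hmiss : Misses ends c w a) : (kempeGraph ends c α β).degree w ≤ 1 := by
  have hlt : #{a ∈ ({α, β} : Finset K) | ¬ Misses ends c w a} < #{α, β} :=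
    card_lt_card <| filter_ssubset.2 ⟨a, by simpa using ha, not_not.2 hmiss⟩
  exact Nat.lt_succ_iff.1 <| (h.degree_kempeGraph_le α β w).trans_lt (hlt.trans_le card_le_two)

lemma card_degree_le_one_le_two [Fintype W] {H : SimpleGraph W} [DecidableRel H.Adj]
    (hH : H.Connected) (hdeg : ∀ w, H.degree w ≤ 2) : #{w | H.degree w ≤ 1} ≤ 2 := by
  have hvert := hH.card_vert_le_card_edgeSet_add_one
  rw [Nat.card_eq_fintype_card, Nat.card_eq_fintype_card, ← SimpleGraph.edgeFinset_card] at hvert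
  have hsum : ∑ w, (H.degree w + if H.degree w ≤ 1 then 1 else 0) ≤ ∑ _w : W, 2 :=
    sum_le_sum fun w _ ↦ by have := hdeg w; split_ifs <;> omega
  rw [sum_add_distrib, H.sum_degrees_eq_twice_card_edges, ← card_filter, sum_const, card_univ,
    smul_eq_mul] at hsum
  omega

open Classical in
lemma eq_of_reachable_of_degree_le_one [Fintype W] {H : SimpleGraph W} {x y : W}
    (hdeg : ∀ w, H.degree w ≤ 2) (hv : H.degree v ≤ 1) (hx : H.degree x ≤ 1)
    (hy : H.degree y ≤ 1) (hvx : H.Reachable v x) (hvy : H.Reachable v y) (hxv : x ≠ v)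
    (hyv : y ≠ v) : x = y := by
  set C := H.connectedComponentMk v
  have degree_le (w : C) : C.toSimpleGraph.degree w ≤ H.degree w :=
    (C.toSimpleGraph_hom.toCopy Subtype.val_injective).degree_le w
  have hcard := card_degree_le_one_le_two C.connected_toSimpleGraph
    fun w ↦ (degree_le w).trans (hdeg w)
  by_contra hxy
  let v' : C := ⟨v, rfl⟩
  let x' : C := ⟨x, SimpleGraph.ConnectedComponent.sound hvx.symm⟩
  let y' : C := ⟨y, SimpleGraph.ConnectedComponent.sound hvy.symm⟩
  refine hcard.not_gt (two_lt_card.2 ⟨v', ?_, x', ?_, y', ?_, ?_, ?_, ?_⟩)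
  · simpa using (degree_le v').trans hv
  · simpa using (degree_le x').trans hx
  · simpa using (degree_le y').trans hy
  · exact fun h ↦ hxv (congrArg Subtype.val h).symm
  · exact fun h ↦ hyv (congrArg Subtype.val h).symm
  · exact fun h ↦ hxy (congrArg Subtype.val h)

/-- Otherwise `v` and the two far ends would be three ends of one Kempe chain. -/
lemma IsOptimal.otherEnd_eq_of_fan [Fintype E] [Finite W] (hloop : ∀ e, ¬ (ends e).IsDiag)
    (h : IsOptimal ends c) (h₀ : c e₀ = none) (hv : v ∈ ends e₀) (hα : Misses ends c v α)
    (he : ReflTransGen (FanStep ends c v) e₀ e) (hf : ReflTransGen (FanStep ends c v) e₀ f)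
    (heβ : Misses ends c (otherEnd ends v e) β) (hfβ : Misses ends c (otherEnd ends v f) β) :
    otherEnd ends v e = otherEnd ends v f := by
  have := Fintype.ofFinite W
  have otherEnd_ne {g : E} (hg : ReflTransGen (FanStep ends c v) e₀ g) :
      otherEnd ends v g ≠ v := by
    intro hgv
    apply hloop g
    rw [ends_eq_of_mem (mem_ends_of_fan hv hg), hgv, Sym2.mk_isDiag_iff]
  exact eq_of_reachable_of_degree_le_one (h.proper.degree_kempeGraph_le_two α β)
    (h.proper.degree_kempeGraph_le_one (.inl rfl) hα)
    (h.proper.degree_kempeGraph_le_one (.inr rfl) heβ)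
    (h.proper.degree_kempeGraph_le_one (.inr rfl) hfβ)
    (h.reachable_otherEnd_of_fan h₀ hv hα he heβ) (h.reachable_otherEnd_of_fan h₀ hv hα hf hfβ)
    (otherEnd_ne he) (otherEnd_ne hf)

end Kempe

section Counting

variable [Fintype E] {v w : W} {e₀ : E} {α : K}

open Classical in
lemma card_le_card_misses_add_card_mem [Fintype K] [DecidableEq W] (ends : E → Sym2 W)
    (c : E → Option K) (w : W) :
    Fintype.card K ≤ #{a | Misses ends c w a} + #{e | w ∈ ends e} := by
  have hpresent : #{a | ¬ Misses ends c w a} ≤ #{e | w ∈ ends e} := by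
    refine card_le_card_of_forall_subsingleton (fun a e ↦ c e = some a) ?_ ?_
    · intro a ha
      obtain ⟨e, hw, hea⟩ : ∃ e, w ∈ ends e ∧ c e = some a := by simpa [Misses] using ha
      exact ⟨e, by simpa using hw, hea⟩
    · rintro e - a ⟨-, ha⟩ b ⟨-, hb⟩
      exact Option.some_injective _ (ha.symm.trans hb)
  have htotal := card_filter_add_card_filter_not (s := univ) fun a ↦ Misses ends c w a
  rw [card_univ] at htotal
  omega

open Classical in
/-- The sets of colours missing at the far ends of a maximal fan are disjoint, and each of these
colours is the colour of an edge of the fan other than `e₀`. -/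
lemma IsOptimal.sum_card_misses_lt_card_fan [Finite W] [Fintype K] [DecidableEq W]
    (hloop : ∀ e, ¬ (ends e).IsDiag) (h : IsOptimal ends c) (h₀ : c e₀ = none)
    (hv : v ∈ ends e₀) (hα : Misses ends c v α) {F : Finset E}
    (hF : ∀ e, e ∈ F ↔ ReflTransGen (FanStep ends c v) e₀ e) :
    ∑ w ∈ F.image (otherEnd ends v), #{a | Misses ends c w a} < #F := by
  have hdisj : (F.image (otherEnd ends v) : Set W).PairwiseDisjoint
      fun w ↦ ({a | Misses ends c w a} : Finset K) := by
    simp only [coe_image]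
    rintro _ ⟨e, he, rfl⟩ _ ⟨f, hf, rfl⟩ hne
    refine disjoint_left.2 fun β heβ hfβ ↦ hne ?_
    exact h.otherEnd_eq_of_fan hloop h₀ hv hα ((hF e).1 he) ((hF f).1 hf)
      (by simpa using heβ) (by simpa using hfβ)
  rw [← card_biUnion hdisj]
  refine lt_of_le_of_lt ?_ (card_erase_lt_of_mem ((hF e₀).2 .refl))
  refine card_le_card_of_forall_subsingleton (fun a e ↦ c e = some a) ?_ ?_
  · intro a ha
    obtain ⟨e, he, hmiss⟩ : ∃ e ∈ F, Misses ends c (otherEnd ends v e) a := by simpa using ha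
    have hva : ¬ Misses ends c v a := fun hva ↦ h.not_misses_of_fan h₀ hv ((hF e).1 he) hva hmiss
    obtain ⟨f, hvf, hfa⟩ : ∃ f, v ∈ ends f ∧ c f = some a := by simpa [Misses] using hva
    have hf₀ : f ≠ e₀ := by rintro rfl; simp [h₀] at hfa
    exact ⟨f, mem_erase.2 ⟨hf₀, (hF f).2 (((hF e).1 he).tail ⟨hvf, a, hfa, hmiss⟩)⟩, hfa⟩
  · rintro e - a ⟨-, ha⟩ b ⟨-, hb⟩
    exact Option.some_injective _ (ha.symm.trans hb)

lemma IsOptimal.ne_none [Finite W] [Fintype K] [DecidableEq W] (hloop : ∀ e, ¬ (ends e).IsDiag)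
    (hcard : ∀ e, ∀ w ∈ ends e, #{f | w ∈ ends f} + #{f | ends f = ends e} ≤ Fintype.card K)
    (h : IsOptimal ends c) (e₀ : E) : c e₀ ≠ none := by
  classical
  intro h₀
  obtain ⟨v, hv⟩ : ∃ v, v ∈ ends e₀ := ⟨_, Sym2.out_fst_mem _⟩
  obtain ⟨α, hα⟩ : ∃ α, Misses ends c v α := by
    have hmult : 0 < #{f | ends f = ends e₀} := card_pos.2 ⟨e₀, by simp⟩
    have hmiss : 0 < #{a | Misses ends c v a} := by
      have := card_le_card_misses_add_card_mem ends c v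
      have := hcard e₀ v hv
      omega
    obtain ⟨α, hα⟩ := card_pos.1 hmiss
    exact ⟨α, by simpa using hα⟩
  let F : Finset E := {e | ReflTransGen (FanStep ends c v) e₀ e}
  have hF (e : E) : e ∈ F ↔ ReflTransGen (FanStep ends c v) e₀ e := by simp [F]
  have hlt := h.sum_card_misses_lt_card_fan hloop h₀ hv hα hF
  rw [card_eq_sum_card_image (otherEnd ends v) F] at hlt
  obtain ⟨w, hw, hwlt⟩ := exists_lt_of_sum_lt hlt
  obtain ⟨e, he, rfl⟩ := mem_image.1 hw
  have hends {f : E} (hf : f ∈ F) : ends f = s(v, otherEnd ends v f) :=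
    ends_eq_of_mem (mem_ends_of_fan hv ((hF f).1 hf))
  have hparallel : #{f ∈ F | otherEnd ends v f = otherEnd ends v e} ≤ #{f | ends f = ends e} := by
    refine card_le_card fun f hf ↦ ?_
    obtain ⟨hfF, hfe⟩ := mem_filter.1 hf
    simp [hends hfF, hends he, hfe]
  have := card_le_card_misses_add_card_mem ends c (otherEnd ends v e)
  have := hcard e (otherEnd ends v e) (hends he ▸ Sym2.mem_mk_right _ _)
  omega

/-- Ore's form of Vizing's theorem for multigraphs. -/
theorem exists_proper_edge_coloring_of_card_le [Finite W] [Fintype K] [DecidableEq W]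
    (hloop : ∀ e, ¬ (ends e).IsDiag)
    (hcard : ∀ e, ∀ w ∈ ends e, #{f | w ∈ ends f} + #{f | ends f = ends e} ≤ Fintype.card K) :
    ∃ c : E → K, ∀ e f w, w ∈ ends e → w ∈ ends f → c e = c f → e = f := by
  obtain ⟨c, hc⟩ := exists_isOptimal ends K
  choose c' hc' using fun e ↦ Option.ne_none_iff_exists'.1 (hc.ne_none hloop hcard e)
  exact ⟨c', fun e f w he hf hef ↦ hc.proper he hf (hc' e) (hef ▸ hc' f)⟩

end Counting

end VizingOre

section InducedMatching

variable {V : Type*} {G : SimpleGraph V} {M : G.Subgraph} {u v w : V}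

/-- A representative of the connected component of `v` in `M`. For a matching `M`, this selects one
end of each edge of `M` and fixes every unmatched vertex. -/
noncomputable def componentRep (M : G.Subgraph) (v : V) : V :=
  (M.spanningCoe.connectedComponentMk v).out

lemma componentRep_componentRep (v : V) : componentRep M (componentRep M v) = componentRep M v :=
  congrArg Quot.out (Quot.out_eq _)

lemma componentRep_eq_iff_reachable :
    componentRep M u = componentRep M v ↔ M.spanningCoe.Reachable u v := by
  rw [← SimpleGraph.ConnectedComponent.eq]
  exact (LeftInverse.injective Quot.out_eq).eq_iff

lemma componentRep_eq_iff (hM : M.IsMatching) :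
    componentRep M u = componentRep M v ↔ u = v ∨ M.Adj u v := by
  rw [componentRep_eq_iff_reachable, SimpleGraph.reachable_iff_reflTransGen]
  constructor
  · intro h
    induction h with
    | refl => exact .inl rfl
    | tail _ hxy ih =>
      obtain rfl | hux := ih
      exacts [.inr hxy, .inl (hM.eq_of_adj_right hux hxy.symm)]
  · rintro (rfl | huv)
    exacts [.refl, .single huv]

lemma card_filter_componentRep_eq_le_two [Fintype V] [DecidableEq V] (hM : M.IsMatching) (v : V) :
    #{u | componentRep M u = componentRep M v} ≤ 2 := by
  classical
  have hpartner : #{u | M.Adj u v} ≤ 1 :=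
    card_le_one.2 fun x hx y hy ↦ hM.eq_of_adj_right (by simpa using hx) (by simpa using hy)
  calc #{u | componentRep M u = componentRep M v}
      ≤ #(insert v ({u | M.Adj u v} : Finset V)) :=
        card_le_card fun u hu ↦ by simpa [componentRep_eq_iff hM] using hu
    _ ≤ 2 := (card_insert_le _ _).trans (Nat.succ_le_succ hpartner)

lemma isDiag_map_componentRep_iff (hM : M.IsMatching) {e : Sym2 V} (he : e ∈ G.edgeSet) :
    (e.map (componentRep M)).IsDiag ↔ e ∈ M.edgeSet := by
  induction e with | _ a b =>
  rw [Sym2.map_mk, Sym2.mk_isDiag_iff, componentRep_eq_iff hM, SimpleGraph.Subgraph.mem_edgeSet,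
    or_iff_right (G.ne_of_adj he)]

open Classical in
/-- The ends, in a multigraph on the vertices of `G`, of the edges of `G` after contracting a
matching `M` without losing its edges: everything attached to an edge of `M` is moved to one end of
it, so that the edges of `M` become pendant. -/
noncomputable def pendantEnds (M : G.Subgraph) (e : G.edgeSet) : Sym2 V :=
  if e.1 ∈ M.edgeSet then e.1 else e.1.map (componentRep M)

lemma map_componentRep_pendantEnds (e : G.edgeSet) :
    (pendantEnds M e).map (componentRep M) = e.1.map (componentRep M) := by
  rw [pendantEnds]
  split_ifs
  · rfl
  · rw [Sym2.map_map]
    exact Sym2.map_congr fun x _ ↦ componentRep_componentRep x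

lemma not_isDiag_pendantEnds (hM : M.IsMatching) (e : G.edgeSet) : ¬ (pendantEnds M e).IsDiag := by
  rw [pendantEnds]
  split_ifs with he
  · exact G.not_isDiag_of_mem_edgeSet e.2
  · rwa [isDiag_map_componentRep_iff hM e.2]

lemma componentRep_mem_pendantEnds (hM : M.IsMatching) {e : G.edgeSet} (hv : v ∈ e.1) :
    componentRep M v ∈ pendantEnds M e := by
  rw [pendantEnds]
  split_ifs with he
  · obtain ⟨u, hu⟩ := hv
    rw [hu, SimpleGraph.Subgraph.mem_edgeSet] at he
    obtain hrep | hadj := (componentRep_eq_iff hM).1 (componentRep_componentRep (M := M) v)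
    · rw [hrep, hu]
      exact Sym2.mem_mk_left v u
    · rw [hu, hM.eq_of_adj_left he hadj.symm]
      exact Sym2.mem_mk_right _ _
  · exact Sym2.mem_map.2 ⟨v, hv, rfl⟩

lemma exists_mem_of_mem_pendantEnds {e : G.edgeSet} (hw : w ∈ pendantEnds M e) :
    ∃ u ∈ e.1, componentRep M u = componentRep M w := by
  rw [← Sym2.mem_map, ← map_componentRep_pendantEnds]
  exact Sym2.mem_map.2 ⟨w, hw, rfl⟩

variable [Fintype V] [DecidableRel G.Adj]

lemma card_mem_pendantEnds_le [DecidableEq V] (hM : M.IsMatching) {D : ℕ}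
    (hdeg : ∀ v, G.degree v ≤ D) (hsum : ∀ u v, M.Adj u v → G.degree u + G.degree v ≤ D + 1)
    (w : V) : #{e | w ∈ pendantEnds M e} ≤ D := by
  rw [← card_map (Embedding.subtype _)]
  by_cases hw : ∃ v, M.Adj w v
  · obtain ⟨v, hwv⟩ := hw
    have hsub : (({e | w ∈ pendantEnds M e} : Finset G.edgeSet).map (Embedding.subtype _)) ⊆
        G.incidenceFinset w ∪ G.incidenceFinset v := by
      simp only [subset_iff, mem_map, mem_filter_univ, mem_union, SimpleGraph.mem_incidenceFinset]
      rintro _ ⟨e, he, rfl⟩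
      obtain ⟨u, hu, huw⟩ := exists_mem_of_mem_pendantEnds he
      obtain rfl | huw := (componentRep_eq_iff hM).1 huw
      · exact .inl ⟨e.2, hu⟩
      · obtain rfl := hM.eq_of_adj_left hwv huw.symm
        exact .inr ⟨e.2, hu⟩
    have hinter : 0 < #(G.incidenceFinset w ∩ G.incidenceFinset v) :=
      card_pos.2 ⟨s(w, v), by simp [SimpleGraph.mk'_mem_incidenceSet_iff, hwv.adj_sub]⟩
    have hunion := card_union_add_card_inter (G.incidenceFinset w) (G.incidenceFinset v)
    rw [G.card_incidenceFinset_eq_degree, G.card_incidenceFinset_eq_degree] at hunion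
    have := card_le_card hsub
    have := hsum w v hwv
    omega
  · refine (card_le_card ?_).trans ((G.card_incidenceFinset_eq_degree w).trans_le (hdeg w))
    simp only [subset_iff, mem_map, mem_filter_univ, SimpleGraph.mem_incidenceFinset]
    rintro _ ⟨e, he, rfl⟩
    obtain ⟨u, hu, huw⟩ := exists_mem_of_mem_pendantEnds he
    obtain rfl := ((componentRep_eq_iff hM).1 huw).resolve_right fun h ↦ hw ⟨u, h.symm⟩
    exact ⟨e.2, hu⟩

lemma card_filter_map_componentRep_eq_le_two [DecidableEq V] (hM : M.IsMatching) (a : V) {b : V}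
    (hb : b ∉ M.verts) :
    #{f : G.edgeSet | f.1.map (componentRep M) = s(componentRep M a, componentRep M b)} ≤ 2 := by
  have eq_of_rep_eq {y : V} (hy : componentRep M y = componentRep M b) : y = b :=
    ((componentRep_eq_iff hM).1 hy).resolve_right fun h ↦ hb h.snd_mem
  have hsub : (({f : G.edgeSet | f.1.map (componentRep M) =
      s(componentRep M a, componentRep M b)} : Finset G.edgeSet).map (Embedding.subtype _)) ⊆
        image (fun x ↦ s(x, b)) {x | componentRep M x = componentRep M a} := by
    simp only [subset_iff, mem_map, mem_filter_univ, mem_image]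
    rintro _ ⟨⟨f, hf⟩, hfab, rfl⟩
    induction f with | _ x y =>
    rw [Sym2.map_mk, Sym2.eq_iff] at hfab
    obtain ⟨hxa, hyb⟩ | ⟨hxb, hya⟩ := hfab
    · exact ⟨x, hxa, by rw [← eq_of_rep_eq hyb]; rfl⟩
    · exact ⟨y, hya, by rw [← eq_of_rep_eq hxb, Sym2.eq_swap]; rfl⟩
  rw [← card_map (Embedding.subtype _)]
  exact (card_le_card hsub).trans
    (card_image_le.trans (card_filter_componentRep_eq_le_two hM a))

lemma card_pendantEnds_eq_le_two [DecidableEq V] (hM : M.IsMatching) (hind : M.IsInduced)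
    (e : G.edgeSet) : #{f | pendantEnds M f = pendantEnds M e} ≤ 2 := by
  have map_eq {f : G.edgeSet} (hf : pendantEnds M f = pendantEnds M e) :
      f.1.map (componentRep M) = e.1.map (componentRep M) := by
    rw [← map_componentRep_pendantEnds, hf, map_componentRep_pendantEnds]
  by_cases he : e.1 ∈ M.edgeSet
  · refine (card_le_one.2 fun f hf g hg ↦ ?_).trans one_le_two
    have eq_self {f : G.edgeSet} (hf : pendantEnds M f = pendantEnds M e) : f = e := by
      have hfM : f.1 ∈ M.edgeSet := by
        rwa [← isDiag_map_componentRep_iff hM f.2, map_eq hf, isDiag_map_componentRep_iff hM e.2]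
      rw [pendantEnds, pendantEnds, if_pos hfM, if_pos he] at hf
      exact Subtype.ext hf
    rw [eq_self ((mem_filter_univ f).1 hf), eq_self ((mem_filter_univ g).1 hg)]
  · refine (card_le_card (monotone_filter_right univ fun f _ ↦ map_eq)).trans ?_
    obtain ⟨e, heG⟩ := e
    induction e with | _ a b =>
    by_cases hb : b ∈ M.verts
    · have ha : a ∉ M.verts := fun ha ↦ he (hind ha hb heG)
      have hcard := card_filter_map_componentRep_eq_le_two hM b ha
      rwa [Sym2.eq_swap] at hcard
    · exact card_filter_map_componentRep_eq_le_two hM a hb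

theorem exists_coloring_of_isMatching_of_isInduced (hM : M.IsMatching) (hind : M.IsInduced) {D : ℕ}
    (hdeg : ∀ v, G.degree v ≤ D) (hsum : ∀ u v, M.Adj u v → G.degree u + G.degree v ≤ D + 1) :
    ∃ c : Sym2 V → ℕ, ProperEdgeColoring G c ∧ (∀ e ∈ G.edgeSet, c e < D + 2) ∧
      ∀ u v, M.Adj u v → colorSet G c u ∩ colorSet G c v = {c s(u, v)} := by
  classical
  obtain ⟨c, hc⟩ := exists_proper_edge_coloring_of_card_le (K := Fin (D + 2))
    (not_isDiag_pendantEnds hM) fun e w _ ↦ by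
      rw [Fintype.card_fin]
      exact add_le_add (card_mem_pendantEnds_le hM hdeg hsum w)
        (card_pendantEnds_eq_le_two hM hind e)
  let c' : Sym2 V → ℕ := extend Subtype.val (fun e ↦ (c e : ℕ)) 0
  have hc' (e : G.edgeSet) : c' e = c e := Subtype.val_injective.extend_apply _ _ _
  have eq_of_color_eq {e f : Sym2 V} (he : e ∈ G.edgeSet) (hf : f ∈ G.edgeSet) {u v : V}
      (hu : u ∈ e) (hv : v ∈ f) (huv : componentRep M u = componentRep M v)
      (hef : c' e = c' f) : e = f := by
    rw [hc' ⟨e, he⟩, hc' ⟨f, hf⟩] at hef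
    exact congrArg Subtype.val <| hc ⟨e, he⟩ ⟨f, hf⟩ _ (componentRep_mem_pendantEnds hM hu)
      (huv ▸ componentRep_mem_pendantEnds hM hv) (Fin.ext hef)
  refine ⟨c', fun e he f hf hne ⟨v, hve, hvf⟩ hef ↦ hne (eq_of_color_eq he hf hve hvf rfl hef),
    fun e he ↦ (hc' ⟨e, he⟩).trans_lt (c ⟨e, he⟩).isLt, fun u v huv ↦ ?_⟩
  refine Set.eq_singleton_iff_unique_mem.2
    ⟨⟨⟨v, huv.adj_sub, rfl⟩, ⟨u, huv.adj_sub.symm, by rw [Sym2.eq_swap]⟩⟩, ?_⟩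
  rintro _ ⟨⟨x, hux, rfl⟩, ⟨y, hvy, hcol⟩⟩
  have hedge : s(v, y) = s(u, x) := eq_of_color_eq hvy hux (Sym2.mem_mk_left _ _)
    (Sym2.mem_mk_left _ _) ((componentRep_eq_iff hM).2 (.inr huv.symm)) hcol
  obtain ⟨hvu, -⟩ | ⟨rfl, -⟩ := Sym2.eq_iff.1 hedge
  exacts [absurd hvu.symm huv.adj_sub.ne, rfl]

end InducedMatching

section LowDegreePair

variable {V : Type*} [Fintype V] {G : SimpleGraph V} [DecidableRel G.Adj] {d : ℕ} {u v w : V}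

/-- The special edges `uv` of the theorem: `u` and `v` are the only vertices of degree less than `d`
in `N(u) ∪ N(v)`. -/
def IsLowDegreePair (G : SimpleGraph V) [DecidableRel G.Adj] (d : ℕ) (u v : V) : Prop :=
  G.Adj u v ∧ {w | (G.Adj u w ∨ G.Adj v w) ∧ G.degree w < d} = {u, v}

lemma IsLowDegreePair.symm (h : IsLowDegreePair G d u v) : IsLowDegreePair G d v u :=
  ⟨h.1.symm, by rw [Set.pair_comm, ← h.2]; simp only [or_comm]⟩

lemma IsLowDegreePair.degree_lt (h : IsLowDegreePair G d u v) : G.degree u < d :=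
  (h.2.ge (Set.mem_insert u {v})).2

lemma IsLowDegreePair.eq_of_adj (h : IsLowDegreePair G d u v) (huw : G.Adj u w)
    (hw : G.degree w < d) : w = v := by
  have hmem : w ∈ ({u, v} : Set V) := h.2.le ⟨.inl huw, hw⟩
  exact hmem.resolve_left huw.ne'

/-- The subgraph formed by the edges `uv` with `IsLowDegreePair G d u v`. -/
def lowDegreePairs (G : SimpleGraph V) [DecidableRel G.Adj] (d : ℕ) : G.Subgraph where
  verts := {u | ∃ v, IsLowDegreePair G d u v}
  Adj := IsLowDegreePair G d
  adj_sub h := h.1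
  edge_vert h := ⟨_, h⟩
  symm := ⟨fun _ _ h ↦ h.symm⟩

lemma isMatching_lowDegreePairs : (lowDegreePairs G d).IsMatching := fun _ ⟨v, h⟩ ↦
  ⟨v, h, fun _ h' ↦ h.eq_of_adj h'.1 h'.symm.degree_lt⟩

lemma isInduced_lowDegreePairs : (lowDegreePairs G d).IsInduced := by
  rintro u ⟨v, hu⟩ w ⟨_, hw⟩ huw
  obtain rfl := hu.eq_of_adj huw hw.degree_lt
  exact hu

theorem initial_colouring_general (G : SimpleGraph V) [DecidableRel G.Adj] (d : ℕ)
    (hd : 2 * d ≤ G.maxDegree + 3) :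
    ∃ c : Sym2 V → ℕ,
      ProperEdgeColoring G c ∧
      (∀ e ∈ G.edgeSet, c e < G.maxDegree + 2) ∧
      (∀ u v : V, G.Adj u v →
        {w : V | (G.Adj u w ∨ G.Adj v w) ∧ G.degree w < d} = {u, v} →
        colorSet G c u ∩ colorSet G c v = {c s(u, v)}) := by
  have hsum (u v : V) (h : IsLowDegreePair G d u v) :
      G.degree u + G.degree v ≤ G.maxDegree + 1 := by
    have := h.degree_lt
    have := h.symm.degree_lt
    omega
  obtain ⟨c, hproper, hlt, hpair⟩ := exists_coloring_of_isMatching_of_isInduced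
    isMatching_lowDegreePairs isInduced_lowDegreePairs G.degree_le_maxDegree hsum
  exact ⟨c, hproper, hlt, fun u v huv hset ↦ hpair u v ⟨huv, hset⟩⟩

end LowDegreePair

/-- Every finite simple graph `G` with maximum degree `Δ`, no isolated edge, and a positive
integer `d` with `2(d-1) < Δ`, has a proper edge colouring with at most `Δ + 2` colours such
that for every edge `uv` for which the set of vertices `w ∈ N(u) ∪ N(v)` of degree `< d` is
exactly `{u, v}`, the colour sets of `u` and `v` intersect exactly in the colour of `uv`. -/
theorem initial_colouring (V : Type) [Fintype V] [DecidableEq V]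
    (G : SimpleGraph V) [DecidableRel G.Adj]
    (hiso : ∀ u v : V, G.Adj u v → ¬(G.degree u = 1 ∧ G.degree v = 1))
    (d : ℕ) (hd : 0 < d) (hdΔ : 2 * (d - 1) < G.maxDegree) :
    ∃ c : Sym2 V → ℕ,
      ProperEdgeColoring G c ∧
      (∀ e ∈ G.edgeSet, c e < G.maxDegree + 2) ∧
      (∀ u v : V, G.Adj u v →
        {w : V | (G.Adj u w ∨ G.Adj v w) ∧ G.degree w < d} = {u, v} →
        colorSet G c u ∩ colorSet G c v = {c s(u, v)}) :=
  initial_colouring_general G d (by omega)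
end

section
/- Let φ(x) = 1 + Σ_{i=1}^{k} w_i x^{l_i}, where k ≥ 1, the w_i are positive real numbers, and the l_i are distinct positive integers. Suppose τ > 0 satisfies τ·φ'(τ) = φ(τ). Then for every real x > 0 with x·φ'(x)/φ(x) < 1, one has φ(τ)/τ < φ(x)/x. -/
/-! Since `φ` is strictly convex on `[0, ∞)`, its graph lies strictly above its tangent at `τ` away
from `τ`. The equation `τ φ'(τ) = φ(τ)` says that this tangent passes through the origin, i.e. it is
the line of slope `φ(τ) / τ` through `0`. Strictness of the convexity also comes from this equation:
if `φ` had degree at most `1`, then `φ(τ) - τ φ'(τ)` would be the positive constant term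
of `φ`. -/

open Set

section Convex

variable {𝕜 E β : Type*} [PartialOrder 𝕜] [AddCommMonoid E] [AddCommMonoid β] [PartialOrder β]
  {S : Set E}

theorem strictConvexOn_const_smul [CommSemiring 𝕜] [SMul 𝕜 E] [Module 𝕜 β] [PosSMulStrictMono 𝕜 β]
    {f : E → β} {c : 𝕜} (hc : 0 < c) (hf : StrictConvexOn 𝕜 S f) :
    StrictConvexOn 𝕜 S fun x => c • f x := by
  refine ⟨hf.1, fun x hx y hy hxy a b ha hb hab => ?_⟩
  calc c • f (a • x + b • y)
      < c • (a • f x + b • f y) := smul_lt_smul_of_pos_left (hf.2 hx hy hxy ha hb hab) hc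
    _ = a • c • f x + b • c • f y := by rw [smul_add, smul_comm c a, smul_comm c b]

theorem strictConvexOn_finsetSum [Semiring 𝕜] [SMul 𝕜 E] [DistribSMul 𝕜 β]
    [IsOrderedCancelAddMonoid β] {ι : Type*} {s : Finset ι} {f : ι → E → β}
    (hf : ∀ i ∈ s, ConvexOn 𝕜 S (f i)) (hf' : ∃ i ∈ s, StrictConvexOn 𝕜 S (f i)) :
    StrictConvexOn 𝕜 S fun x => ∑ i ∈ s, f i x := by
  obtain ⟨j, hj, hfj⟩ := hf'
  refine ⟨hfj.1, fun x hx y hy hxy a b ha hb hab => ?_⟩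
  simp only [Finset.smul_sum, ← Finset.sum_add_distrib]
  exact Finset.sum_lt_sum (fun i hi => (hf i hi).2 hx hy ha.le hb.le hab)
    ⟨j, hj, hfj.2 hx hy hxy ha hb hab⟩

end Convex

section Tangent

variable {S : Set ℝ} {f : ℝ → ℝ} {f' a x : ℝ}

theorem tangent_lt_of_strictConvexOn (hf : StrictConvexOn ℝ S f) (ha : a ∈ S) (hx : x ∈ S)
    (hxa : x ≠ a) (hf' : HasDerivAt f f' a) : f a + f' * (x - a) < f x := by
  rcases hxa.lt_or_gt with hlt | hgt
  · have hslope := hf.slope_lt_of_hasDerivAt hx ha hlt hf'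
    rw [slope_def_field, div_lt_iff₀ (sub_pos.mpr hlt)] at hslope
    linarith
  · have hslope := hf.lt_slope_of_hasDerivAt ha hx hgt hf'
    rw [slope_def_field, lt_div_iff₀ (sub_pos.mpr hgt)] at hslope
    linarith

theorem div_self_lt_div_self_of_strictConvexOn (hf : StrictConvexOn ℝ S f) (ha : a ∈ S)
    (hx : x ∈ S) (ha₀ : a ≠ 0) (hx₀ : 0 < x) (hxa : x ≠ a) (hf' : HasDerivAt f f' a)
    (heq : a * f' = f a) : f a / a < f x / x := by
  have htangent := tangent_lt_of_strictConvexOn hf ha hx hxa hf'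
  rw [← heq, mul_div_cancel_left₀ _ ha₀, lt_div_iff₀ hx₀]
  linarith

end Tangent

section SumMulPow

variable {ι : Type*}

theorem mul_deriv_sum_mul_pow {𝕜 : Type*} [NontriviallyNormedField 𝕜] (s : Finset ι) (w : ι → 𝕜)
    (l : ι → ℕ) (x : 𝕜) :
    x * deriv (fun y => ∑ i ∈ s, w i * y ^ l i) x = ∑ i ∈ s, l i * (w i * x ^ l i) := by
  have hderiv : HasDerivAt (fun y => ∑ i ∈ s, w i * y ^ l i)
      (∑ i ∈ s, w i * (l i * x ^ (l i - 1))) x :=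
    HasDerivAt.fun_sum fun i _ => (hasDerivAt_pow (l i) x).const_mul (w i)
  rw [hderiv.deriv, Finset.mul_sum]
  refine Finset.sum_congr rfl fun i _ => ?_
  cases l i with
  | zero => simp
  | succ n => rw [Nat.add_sub_cancel, pow_succ]; ring

variable {s : Finset ι} {w : ι → ℝ} {l : ι → ℕ}

theorem strictConvexOn_sum_mul_pow (hw : ∀ i ∈ s, 0 ≤ w i) (h : ∃ i ∈ s, 0 < w i ∧ 2 ≤ l i) :
    StrictConvexOn ℝ (Ici 0) fun x => ∑ i ∈ s, w i * x ^ l i := by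
  obtain ⟨j, hj, hwj, hlj⟩ := h
  exact strictConvexOn_finsetSum (fun i hi => (convexOn_pow (l i)).smul (hw i hi))
    ⟨j, hj, strictConvexOn_const_smul hwj (strictConvexOn_pow hlj)⟩

theorem exists_pos_two_le_of_sum_lt_sum_mul {x : ℝ} (hw : ∀ i ∈ s, 0 ≤ w i) (hx : 0 ≤ x)
    (h : ∑ i ∈ s, w i * x ^ l i < ∑ i ∈ s, l i * (w i * x ^ l i)) :
    ∃ i ∈ s, 0 < w i ∧ 2 ≤ l i := by
  obtain ⟨i, hi, hlt⟩ := Finset.exists_lt_of_sum_lt h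
  have hterm : 0 ≤ w i * x ^ l i := mul_nonneg (hw i hi) (pow_nonneg hx _)
  refine ⟨i, hi, (hw i hi).lt_of_ne' fun hwi => ?_, ?_⟩
  · simp [hwi] at hlt
  · exact_mod_cast lt_of_mul_lt_mul_right ((one_mul _).trans_lt hlt) hterm

theorem one_add_sum_mul_pow_pos {x : ℝ} (hw : ∀ i ∈ s, 0 ≤ w i) (hx : 0 ≤ x) :
    0 < 1 + ∑ i ∈ s, w i * x ^ l i :=
  add_pos_of_pos_of_nonneg one_pos <|
    Finset.sum_nonneg fun i hi => mul_nonneg (hw i hi) (pow_nonneg hx _)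

end SumMulPow

theorem phi_ratio_lt_general {ι : Type*} (s : Finset ι) (w : ι → ℝ) (l : ι → ℕ)
    (hw : ∀ i ∈ s, 0 ≤ w i) (φ : ℝ → ℝ) (hφ : ∀ x, φ x = 1 + ∑ i ∈ s, w i * x ^ l i)
    (τ : ℝ) (hτ : 0 < τ) (hτeq : τ * deriv φ τ = φ τ) (x : ℝ) (hx : 0 < x) (hxτ : x ≠ τ) :
    φ τ / τ < φ x / x := by
  obtain rfl : φ = fun y => 1 + ∑ i ∈ s, w i * y ^ l i := funext hφ
  have hsum : ∑ i ∈ s, l i * (w i * τ ^ l i) = 1 + ∑ i ∈ s, w i * τ ^ l i := by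
    rw [← mul_deriv_sum_mul_pow, ← deriv_const_add 1]
    exact hτeq
  have hdeg : ∃ i ∈ s, 0 < w i ∧ 2 ≤ l i :=
    exists_pos_two_le_of_sum_lt_sum_mul hw hτ.le (by linarith)
  have hconv : StrictConvexOn ℝ (Ici 0) fun y => 1 + ∑ i ∈ s, w i * y ^ l i :=
    ((strictConvexOn_sum_mul_pow hw hdeg).add_const 1).congr fun _ _ => add_comm _ _
  have hdiff : DifferentiableAt ℝ (fun y => 1 + ∑ i ∈ s, w i * y ^ l i) τ := by fun_prop
  exact div_self_lt_div_self_of_strictConvexOn hconv hτ.le hx.le hτ.ne' hx hxτ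
    hdiff.hasDerivAt hτeq

/-- Let `φ(x) = 1 + Σ wᵢ x^{lᵢ}` with positive weights and distinct positive exponents, and
let `τ > 0` satisfy `τ φ'(τ) = φ(τ)`. Then for every `x > 0` with `x φ'(x)/φ(x) < 1` we have
`φ(τ)/τ < φ(x)/x`. -/
theorem phi_ratio_lt (k : ℕ) (hk : 1 ≤ k) (w : Fin k → ℝ) (l : Fin k → ℕ)
    (hw : ∀ i, 0 < w i) (hl : ∀ i, 1 ≤ l i) (hinj : Function.Injective l)
    (φ : ℝ → ℝ) (hφ : ∀ x, φ x = 1 + ∑ i, w i * x ^ l i)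
    (τ : ℝ) (hτ : 0 < τ) (hτeq : τ * deriv φ τ = φ τ)
    (x : ℝ) (hx : 0 < x) (hlt : x * deriv φ x / φ x < 1) :
    φ τ / τ < φ x / x := by
  have hw' : ∀ i ∈ Finset.univ, 0 ≤ w i := fun i _ => (hw i).le
  have hφτ : 0 < φ τ := hφ τ ▸ one_add_sum_mul_pow_pos hw' hτ.le
  have hxτ : x ≠ τ := fun h => hlt.ne (by rw [h, hτeq, div_self hφτ.ne'])
  exact phi_ratio_lt_general Finset.univ w l hw' φ hφ τ hτ hτeq x hx hxτ
end

section
/- Let φ(x) = 1 + Σ_{i=1}^{k} w_i x^{l_i}, where k ≥ 1, the w_i are positive real numbers, the l_i are distinct positive integers, and at least one l_i is at least 2. Then there exists exactly one real τ > 0 such that τ·φ'(τ) = φ(τ). -/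
/-!
The equation `τ φ'(τ) = φ(τ)` says that the tangent to the graph of `φ` at `τ` passes through the
origin, or equivalently that `τ` is a critical point of `φ(x) / x`. This quotient tends to `∞` both
at `0`, because `φ(0) > 0`, and at `∞`, because `φ` grows superlinearly, so it has a minimum on
`(0, ∞)`. Two such points cannot exist because `x φ'(x) - φ(x)`, the negative of the height at
which the tangent at `x` meets the vertical axis, is strictly increasing for strictly convex `φ`.
-/

open Set Filter Topology

section Extremum

theorem exists_isMinOn_Ioi_of_tendsto_atTop {α β : Type*} [LinearOrder α] [NoMaxOrder α]
    [TopologicalSpace α] [OrderTopology α] [CompactIccSpace α] [LinearOrder β]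
    [TopologicalSpace β] [ClosedIicTopology β] {f : α → β} {a : α}
    (hf : ContinuousOn f (Ioi a)) (ha : Tendsto f (𝓝[>] a) atTop)
    (htop : Tendsto f atTop atTop) : ∃ x ∈ Ioi a, IsMinOn f (Ioi a) x := by
  obtain ⟨b, hab⟩ := exists_gt a
  obtain ⟨u, hau, hu⟩ := (mem_nhdsGT_iff_exists_Ioo_subset' hab).1 (ha.eventually_ge_atTop (f b))
  have : Nonempty α := ⟨a⟩
  obtain ⟨v, hv⟩ := eventually_atTop.1 (htop.eventually_ge_atTop (f b))
  have hsub : Icc (min u b) (max v b) ⊆ Ioi a := fun x hx ↦ (lt_min hau hab).trans_le hx.1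
  have hb : b ∈ Icc (min u b) (max v b) := ⟨min_le_right u b, le_max_right v b⟩
  obtain ⟨x, hx, hmin⟩ := isCompact_Icc.exists_isMinOn ⟨b, hb⟩ (hf.mono hsub)
  refine ⟨x, hsub hx, fun y hy ↦ ?_⟩
  rcases lt_or_ge y (min u b) with hyu | hyu
  · exact (hmin hb).trans (hu ⟨hy, hyu.trans_le (min_le_left u b)⟩)
  rcases le_or_gt y (max v b) with hyv | hyv
  · exact hmin ⟨hyu, hyv⟩
  · exact (hmin hb).trans (hv y ((le_max_left v b).trans hyv.le))

theorem mul_deriv_eq_of_isLocalExtr_div {f : ℝ → ℝ} {x : ℝ} (hx : x ≠ 0)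
    (hf : DifferentiableAt ℝ f x) (hext : IsLocalExtr (fun y ↦ f y / y) x) :
    x * deriv f x = f x := by
  have hderiv := hext.hasDerivAt_eq_zero (hf.hasDerivAt.fun_div (hasDerivAt_id' x) hx)
  rw [div_eq_zero_iff, or_iff_left (pow_ne_zero 2 hx)] at hderiv
  linarith

end Extremum

section StrictConvex

theorem strictMonoOn_mul_deriv_sub_of_strictConvexOn {f : ℝ → ℝ} {s : Set ℝ}
    (hf : StrictConvexOn ℝ s f) (hs : s ⊆ Ici 0) (hd : ∀ x ∈ s, DifferentiableAt ℝ f x) :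
    StrictMonoOn (fun x ↦ x * deriv f x - f x) s := by
  intro x hx y hy hxy
  have hmono : deriv f x ≤ deriv f y := (hf.strictMonoOn_deriv hd hx hy hxy).le
  have hslope : f y - f x < deriv f y * (y - x) := by
    have := hf.slope_lt_deriv hx hy hxy (hd y hy)
    rwa [slope_def_field, div_lt_iff₀ (sub_pos.2 hxy)] at this
  calc x * deriv f x - f x ≤ x * deriv f y - f x := by gcongr; exact hs hx
    _ < y * deriv f y - f y := by linarith

theorem existsUnique_pos_mul_deriv_eq_of_strictConvexOn {f : ℝ → ℝ}
    (hf : StrictConvexOn ℝ (Ioi 0) f) (hd : ∀ x ∈ Ioi 0, DifferentiableAt ℝ f x)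
    (hzero : Tendsto (fun x ↦ f x / x) (𝓝[>] 0) atTop)
    (htop : Tendsto (fun x ↦ f x / x) atTop atTop) :
    ∃! τ : ℝ, 0 < τ ∧ τ * deriv f τ = f τ := by
  have hcont : ContinuousOn (fun x ↦ f x / x) (Ioi 0) := fun x hx ↦
    ((hd x hx).continuousAt.div continuousAt_id (ne_of_gt hx)).continuousWithinAt
  obtain ⟨τ, hτ, hmin⟩ := exists_isMinOn_Ioi_of_tendsto_atTop hcont hzero htop
  have hτ_eq : τ * deriv f τ = f τ := mul_deriv_eq_of_isLocalExtr_div (ne_of_gt hτ) (hd τ hτ)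
    (.inl (hmin.isLocalMin (Ioi_mem_nhds hτ)))
  refine ⟨τ, ⟨hτ, hτ_eq⟩, fun σ ⟨hσ, hσ_eq⟩ ↦ ?_⟩
  exact (strictMonoOn_mul_deriv_sub_of_strictConvexOn hf Ioi_subset_Ici_self hd).injOn hσ hτ
    (by simp only [hσ_eq, hτ_eq, sub_self])

end StrictConvex

section ConvexOperations

variable {𝕜 E β ι : Type*} [PartialOrder 𝕜] [AddCommMonoid E] [AddCommMonoid β] [PartialOrder β]
  {s : Set E}

theorem strictConvexOn_finset_sum [Semiring 𝕜] [SMul 𝕜 E] [DistribSMul 𝕜 β]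
    [IsOrderedCancelAddMonoid β] {t : Finset ι} {f : ι → E → β} (hf : ∀ i ∈ t, ConvexOn 𝕜 s (f i))
    (hstrict : ∃ j ∈ t, StrictConvexOn 𝕜 s (f j)) :
    StrictConvexOn 𝕜 s (fun x ↦ ∑ i ∈ t, f i x) := by
  obtain ⟨j, hj, hfj⟩ := hstrict
  refine ⟨hfj.1, fun x hx y hy hxy a b ha hb hab ↦ ?_⟩
  simp only [Finset.smul_sum, ← Finset.sum_add_distrib]
  exact Finset.sum_lt_sum (fun i hi ↦ (hf i hi).2 hx hy ha.le hb.le hab)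
    ⟨j, hj, hfj.2 hx hy hxy ha hb hab⟩

theorem strictConvexOn_smul [CommSemiring 𝕜] [SMul 𝕜 E] [Module 𝕜 β] [PosSMulStrictMono 𝕜 β]
    {f : E → β} {c : 𝕜} (hc : 0 < c) (hf : StrictConvexOn 𝕜 s f) :
    StrictConvexOn 𝕜 s (fun x ↦ c • f x) := by
  refine ⟨hf.1, fun x hx y hy hxy a b ha hb hab ↦ ?_⟩
  calc c • f (a • x + b • y) < c • (a • f x + b • f y) :=
        smul_lt_smul_of_pos_left (hf.2 hx hy hxy ha hb hab) hc
    _ = a • c • f x + b • c • f y := by rw [smul_add, smul_comm c, smul_comm c]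

end ConvexOperations

section Rpow

theorem convexOn_rpow_of_nonpos {p : ℝ} (hp : p ≤ 0) :
    ConvexOn ℝ (Ioi 0) fun x : ℝ ↦ x ^ p := by
  have hlog : ConvexOn ℝ (Ioi 0) fun x ↦ Real.log x * p := by
    simpa only [Pi.neg_apply, smul_eq_mul, neg_mul_neg, mul_comm p] using
      strictConcaveOn_log_Ioi.concaveOn.neg.smul (neg_nonneg.2 hp)
  have hcont : ContinuousOn (fun x ↦ Real.log x * p) (Ioi 0) :=
    (Real.continuousOn_log.mono fun x hx ↦ ne_of_gt hx).mul_const p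
  have himage : Convex ℝ ((fun x ↦ Real.log x * p) '' Ioi 0) :=
    (isPreconnected_Ioi.image _ hcont).ordConnected.convex
  exact ((convexOn_exp.subset (subset_univ _) himage).comp hlog
    (Real.exp_monotone.monotoneOn _)).congr fun x hx ↦ (Real.rpow_def_of_pos hx p).symm

theorem convexOn_rpow_of_notMem_Ioo {p : ℝ} (hp : p ∉ Ioo 0 1) :
    ConvexOn ℝ (Ioi 0) fun x : ℝ ↦ x ^ p := by
  rcases le_or_gt p 0 with hp_nonpos | hp_pos
  · exact convexOn_rpow_of_nonpos hp_nonpos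
  · have hp_one : 1 ≤ p := not_lt.1 fun hlt ↦ hp ⟨hp_pos, hlt⟩
    exact (convexOn_rpow hp_one).subset Ioi_subset_Ici_self (convex_Ioi 0)

end Rpow

/-- The function `x ↦ c + ∑ i, w i * x ^ p i` with constant term `c`, weights `w` and real
exponents `p`, the form of the function `φ`. It is meant for `x > 0`, as the real power takes
conventional values elsewhere. -/
noncomputable def posynomial {ι : Type*} [Fintype ι] (c : ℝ) (w p : ι → ℝ) (x : ℝ) : ℝ :=
  c + ∑ i, w i * x ^ p i

namespace posynomial

variable {ι : Type*} [Fintype ι] {c : ℝ} {w p : ι → ℝ} {x : ℝ}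

theorem differentiableAt (hx : x ≠ 0) : DifferentiableAt ℝ (posynomial c w p) x := by
  unfold posynomial
  fun_prop (disch := simp [hx])

theorem strictConvexOn (hw : ∀ i, 0 ≤ w i) (hp : ∀ i, p i ∉ Ioo 0 1)
    (hj : ∃ j, 0 < w j ∧ 1 < p j) : StrictConvexOn ℝ (Ioi 0) (posynomial c w p) := by
  obtain ⟨j, hwj, hpj⟩ := hj
  have hterm : ∀ i, ConvexOn ℝ (Ioi 0) fun x ↦ w i * x ^ p i := fun i ↦
    (convexOn_rpow_of_notMem_Ioo (hp i)).smul (hw i)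
  have hstrict : StrictConvexOn ℝ (Ioi 0) fun x ↦ w j * x ^ p j :=
    strictConvexOn_smul hwj
      ((strictConvexOn_rpow hpj).subset Ioi_subset_Ici_self (convex_Ioi 0))
  exact (convexOn_const c (convex_Ioi 0)).add_strictConvexOn
    (strictConvexOn_finset_sum (fun i _ ↦ hterm i) ⟨j, Finset.mem_univ j, hstrict⟩)

theorem const_le (hw : ∀ i, 0 ≤ w i) (hx : 0 ≤ x) : c ≤ posynomial c w p x :=
  le_add_of_nonneg_right <| Finset.sum_nonneg fun i _ ↦ mul_nonneg (hw i) (Real.rpow_nonneg hx _)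

theorem mul_rpow_le (hc : 0 ≤ c) (hw : ∀ i, 0 ≤ w i) (hx : 0 ≤ x) (j : ι) :
    w j * x ^ p j ≤ posynomial c w p x :=
  (Finset.single_le_sum (f := fun i ↦ w i * x ^ p i)
    (fun i _ ↦ mul_nonneg (hw i) (Real.rpow_nonneg hx _)) (Finset.mem_univ j)).trans
    (le_add_of_nonneg_left hc)

theorem tendsto_div_nhdsGT_zero (hc : 0 < c) (hw : ∀ i, 0 ≤ w i) :
    Tendsto (fun x ↦ posynomial c w p x / x) (𝓝[>] 0) atTop := by
  refine tendsto_atTop_mono' _ ?_ (tendsto_inv_nhdsGT_zero.const_mul_atTop hc)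
  filter_upwards [self_mem_nhdsWithin] with x (hx : 0 < x)
  rw [← div_eq_mul_inv]
  gcongr
  exact const_le hw hx.le

theorem tendsto_div_atTop (hc : 0 ≤ c) (hw : ∀ i, 0 ≤ w i) (hj : ∃ j, 0 < w j ∧ 1 < p j) :
    Tendsto (fun x ↦ posynomial c w p x / x) atTop atTop := by
  obtain ⟨j, hwj, hpj⟩ := hj
  refine tendsto_atTop_mono' _ ?_ ((tendsto_rpow_atTop (sub_pos.2 hpj)).const_mul_atTop hwj)
  filter_upwards [eventually_gt_atTop 0] with x hx
  rw [Real.rpow_sub_one hx.ne', ← mul_div_assoc]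
  gcongr
  exact mul_rpow_le hc hw hx.le j

end posynomial

theorem phi_unique_tau_general {ι : Type*} [Fintype ι] {c : ℝ} {w p : ι → ℝ} (hc : 0 < c)
    (hw : ∀ i, 0 ≤ w i) (hp : ∀ i, p i ∉ Ioo 0 1) (hj : ∃ j, 0 < w j ∧ 1 < p j) :
    ∃! τ : ℝ, 0 < τ ∧ τ * deriv (posynomial c w p) τ = posynomial c w p τ :=
  existsUnique_pos_mul_deriv_eq_of_strictConvexOn (posynomial.strictConvexOn hw hp hj)
    (fun _ hx ↦ posynomial.differentiableAt (ne_of_gt hx))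
    (posynomial.tendsto_div_nhdsGT_zero hc hw) (posynomial.tendsto_div_atTop hc.le hw hj)

/-- Let `φ(x) = 1 + Σ wᵢ x^{lᵢ}` with positive weights and distinct positive exponents, at
least one exponent being at least `2`. Then there is exactly one `τ > 0` with
`τ φ'(τ) = φ(τ)`. -/
theorem phi_unique_tau (k : ℕ) (hk : 1 ≤ k) (w : Fin k → ℝ) (l : Fin k → ℕ)
    (hw : ∀ i, 0 < w i) (hl : ∀ i, 1 ≤ l i) (hinj : Function.Injective l)
    (hl2 : ∃ i, 2 ≤ l i)
    (φ : ℝ → ℝ) (hφ : ∀ x, φ x = 1 + ∑ i, w i * x ^ l i) :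
    ∃! τ : ℝ, 0 < τ ∧ τ * deriv φ τ = φ τ := by
  obtain rfl : φ = posynomial 1 w (fun i ↦ l i) :=
    funext fun x ↦ by simp only [hφ, posynomial, Real.rpow_natCast]
  exact phi_unique_tau_general one_pos (fun i ↦ (hw i).le)
    (fun i hi ↦ hi.2.not_ge (Nat.one_le_cast.2 (hl i)))
    (hl2.imp fun i hi ↦ ⟨hw i, Nat.one_lt_cast.2 hi⟩)
end

section
/- Let φ(x) = 1 + Σ_{i=1}^{k} w_i x^{l_i}, where k ≥ 1, the w_i are positive real numbers, and the l_i are distinct positive integers. Then the function x ↦ x·φ'(x)/φ(x) is strictly increasing on the interval (0, ∞). -/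
/-!
If `φ x = ∑ wᵢ x ^ pᵢ`, then `x φ'(x) / φ(x)` is the mean of the exponents `pᵢ` with respect to the
weights `wᵢ x ^ pᵢ`. Passing from `x` to `y > x` multiplies the weight of `pᵢ` by `(y / x) ^ pᵢ`,
which increases with `pᵢ`, so by Chebyshev's sum inequality the mean goes up. The constant term `1`
is the summand with exponent `0`.
-/

open Finset

section Chebyshev

variable {ι R : Type*} {s : Finset ι} {w f g : ι → R}

theorem sum_sum_mul_sub_mul_sub [CommRing R] (s : Finset ι) (w f g : ι → R) :
    ∑ i ∈ s, ∑ j ∈ s, w i * w j * ((f j - f i) * (g j - g i)) =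
      2 * ((∑ i ∈ s, w i) * ∑ i ∈ s, w i * g i * f i -
        (∑ i ∈ s, w i * f i) * ∑ i ∈ s, w i * g i) := by
  calc ∑ i ∈ s, ∑ j ∈ s, w i * w j * ((f j - f i) * (g j - g i))
    _ = ∑ i ∈ s, ∑ j ∈ s, (w i * (w j * g j * f j) + w i * g i * f i * w j
          - w i * f i * (w j * g j) - w i * g i * (w j * f j)) :=
      sum_congr rfl fun i _ => sum_congr rfl fun j _ => by ring
    _ = _ := by
      simp only [sum_add_distrib, sum_sub_distrib, ← sum_mul_sum]
      ring

theorem sum_mul_mul_sum_mul_lt_of_monovaryOn [CommRing R] [LinearOrder R] [IsStrictOrderedRing R]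
    (hw : ∀ i ∈ s, 0 < w i) (hfg : MonovaryOn f g s) {i j : ι} (hi : i ∈ s) (hj : j ∈ s)
    (hf : f i < f j) (hg : g i < g j) :
    (∑ i ∈ s, w i * f i) * ∑ i ∈ s, w i * g i < (∑ i ∈ s, w i) * ∑ i ∈ s, w i * g i * f i := by
  have term_nonneg : ∀ a ∈ s, ∀ b ∈ s, 0 ≤ w a * w b * ((f b - f a) * (g b - g a)) :=
    fun a ha b hb => mul_nonneg (mul_pos (hw a ha) (hw b hb)).le
      (monovaryOn_iff_forall_mul_nonneg.1 hfg ha hb)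
  have term_pos : 0 < w i * w j * ((f j - f i) * (g j - g i)) :=
    mul_pos (mul_pos (hw i hi) (hw j hj)) (mul_pos (sub_pos.2 hf) (sub_pos.2 hg))
  have double_sum_pos : 0 < ∑ a ∈ s, ∑ b ∈ s, w a * w b * ((f b - f a) * (g b - g a)) :=
    sum_pos' (fun a ha => sum_nonneg (term_nonneg a ha))
      ⟨i, hi, sum_pos' (term_nonneg i hi) ⟨j, hj, term_pos⟩⟩
  rw [sum_sum_mul_sub_mul_sub] at double_sum_pos
  exact sub_pos.1 (pos_of_mul_pos_right double_sum_pos zero_le_two)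

theorem centerMass_lt_centerMass_mul_of_monovaryOn [Field R] [LinearOrder R]
    [IsStrictOrderedRing R] (hw : ∀ i ∈ s, 0 < w i) (hg_pos : ∀ i ∈ s, 0 < g i)
    (hfg : MonovaryOn f g s) {i j : ι} (hi : i ∈ s) (hj : j ∈ s) (hf : f i < f j)
    (hg : g i < g j) :
    s.centerMass w f < s.centerMass (fun i => w i * g i) f := by
  have hwg : ∀ i ∈ s, 0 < w i * g i := fun i hi => mul_pos (hw i hi) (hg_pos i hi)
  simp only [centerMass, smul_eq_mul, ← div_eq_inv_mul]
  rw [div_lt_div_iff₀ (sum_pos hw ⟨i, hi⟩) (sum_pos hwg ⟨i, hi⟩),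
    mul_comm (∑ i ∈ s, _ * f i) (∑ i ∈ s, w i)]
  exact sum_mul_mul_sum_mul_lt_of_monovaryOn hw hfg hi hj hf hg

end Chebyshev

section SumRpow

variable {ι : Type*} {s : Finset ι} {w p : ι → ℝ}

theorem strictMonoOn_centerMass_mul_rpow (hw : ∀ i ∈ s, 0 < w i) {i j : ι} (hi : i ∈ s)
    (hj : j ∈ s) (hij : p i < p j) :
    StrictMonoOn (fun x : ℝ => s.centerMass (fun i => w i * x ^ p i) p) (Set.Ioi 0) := by
  intro x (hx : 0 < x) y (hy : 0 < y) hxy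
  have hmono : StrictMono fun r : ℝ => (y / x) ^ r :=
    Real.strictMono_rpow_of_base_gt_one ((one_lt_div hx).2 hxy)
  have rescale (i : ι) : w i * x ^ p i * (y / x) ^ p i = w i * y ^ p i := by
    rw [mul_assoc, ← Real.mul_rpow hx.le (div_pos hy hx).le, mul_div_cancel₀ _ hx.ne']
  simpa only [rescale] using centerMass_lt_centerMass_mul_of_monovaryOn
    (fun i hi => mul_pos (hw i hi) (Real.rpow_pos_of_pos hx (p i)))
    (fun i _ => Real.rpow_pos_of_pos (div_pos hy hx) (p i))
    ((monovaryOn_self p s).comp_monotone_on_left hmono.monotone).symm hi hj hij (hmono hij)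

theorem mul_deriv_sum_mul_rpow (s : Finset ι) (w p : ι → ℝ) {x : ℝ} (hx : x ≠ 0) :
    x * deriv (fun t => ∑ i ∈ s, w i * t ^ p i) x = ∑ i ∈ s, w i * x ^ p i * p i := by
  have h : HasDerivAt (fun t => ∑ i ∈ s, w i * t ^ p i)
      (∑ i ∈ s, w i * (p i * x ^ (p i - 1))) x :=
    .fun_sum fun i _ => (Real.hasDerivAt_rpow_const (.inl hx)).const_mul (w i)
  rw [h.deriv, mul_sum]
  refine sum_congr rfl fun i _ => ?_
  rw [Real.rpow_sub_one hx]
  field_simp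

theorem eqOn_mul_deriv_div_centerMass_rpow {φ : ℝ → ℝ}
    (hφ : Set.EqOn φ (fun x => ∑ i ∈ s, w i * x ^ p i) (Set.Ioi 0)) :
    Set.EqOn (fun x => x * deriv φ x / φ x)
      (fun x => s.centerMass (fun i => w i * x ^ p i) p) (Set.Ioi 0) := by
  intro x hx
  simp only [centerMass, smul_eq_mul, ← div_eq_inv_mul]
  rw [(hφ.eventuallyEq_of_mem (Ioi_mem_nhds hx)).deriv_eq, hφ hx,
    mul_deriv_sum_mul_rpow s w p (ne_of_gt hx)]

theorem phi_log_deriv_strict_mono_general (hw : ∀ i ∈ s, 0 < w i) {i j : ι} (hi : i ∈ s)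
    (hj : j ∈ s) (hij : p i < p j) {φ : ℝ → ℝ}
    (hφ : Set.EqOn φ (fun x => ∑ i ∈ s, w i * x ^ p i) (Set.Ioi 0)) :
    StrictMonoOn (fun x => x * deriv φ x / φ x) (Set.Ioi (0 : ℝ)) :=
  (strictMonoOn_centerMass_mul_rpow hw hi hj hij).congr
    (eqOn_mul_deriv_div_centerMass_rpow hφ).symm

end SumRpow

/-- Let `φ(x) = 1 + Σ wᵢ x^{lᵢ}` with positive weights and distinct positive exponents. Then
`x ↦ x φ'(x)/φ(x)` is strictly increasing on `(0, ∞)`. -/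
theorem phi_log_deriv_strict_mono (k : ℕ) (hk : 1 ≤ k) (w : Fin k → ℝ) (l : Fin k → ℕ)
    (hw : ∀ i, 0 < w i) (hl : ∀ i, 1 ≤ l i) (hinj : Function.Injective l)
    (φ : ℝ → ℝ) (hφ : ∀ x, φ x = 1 + ∑ i, w i * x ^ l i) :
    StrictMonoOn (fun x => x * deriv φ x / φ x) (Set.Ioi (0 : ℝ)) :=
  phi_log_deriv_strict_mono_general (s := univ) (w := fun o => o.elim 1 w)
    (p := fun o => o.elim 0 fun i => (l i : ℝ)) (i := none) (j := some ⟨0, hk⟩)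
    (by simp [Option.forall, hw]) (mem_univ _) (mem_univ _) (Nat.cast_pos.2 (hl _))
    fun x _ => by simp [hφ, Fintype.sum_option]
end

section
/- For every sufficiently small real ε > 0 there exists an integer Δ₀ such that for every integer Δ ≥ Δ₀ the following holds. Set d := ⌈(1/2 − ε)Δ⌉ and define the real polynomial φ(x) := 1 + w₁x^{14} + w₂x² + w₃x³ + w₄x⁴ + w₅x⁵, where w₁ = C(Δ,13)·d^{15}, w₂ = 15·d³, w₃ = 2⁷·Δ³·C(d,2), w₄ = 2^{12}·Δ⁴·d·C(d,2), and w₅ = 2^{11}·Δ⁴·d²·C(d,2). Let τ be the unique positive real satisfying τ·φ'(τ) = φ(τ). Then φ(τ)/τ < C(d−13, 2) − 3d. -/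
/-!
Since `φ` is convex on `[0, ∞)`, its graph lies above its tangent line at `τ`, and the equation
`τ φ'(τ) = φ(τ)` says that this line passes through the origin. Hence `φ(τ)/τ ≤ φ(x)/x` for every
`x > 0`, and it suffices to exhibit one good `x`. At `x = a/(dΔ)` the ratio is at most
`dΔ/a + (a¹³/13!) d²` up to lower-order terms. For `a = 9/2` and `Δ ≤ (200/99) d` this is less than
`0.499 d²`, whereas `C(d - 13, 2) - 3d` is `d²/2` up to a term linear in `d`.
-/

open Set

theorem div_le_div_of_convexOn_of_mul_deriv_eq {s : Set ℝ} {f : ℝ → ℝ} {f' τ x : ℝ}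
    (hf : ConvexOn ℝ s f) (hτs : τ ∈ s) (hxs : x ∈ s) (hτ : 0 < τ) (hx : 0 < x)
    (hf' : HasDerivWithinAt f f' s τ) (htangent : τ * f' = f τ) :
    f τ / τ ≤ f x / x := by
  have tangent_le : f τ + f' * (x - τ) ≤ f x := by
    rcases lt_trichotomy x τ with hlt | rfl | hlt
    · have := hf.slope_le_of_hasDerivWithinAt hxs hτs hlt hf'
      rw [slope_def_field, div_le_iff₀ (sub_pos.2 hlt)] at this
      linarith
    · simp
    · have := hf.le_slope_of_hasDerivWithinAt hτs hxs hlt hf'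
      rw [slope_def_field, le_div_iff₀ (sub_pos.2 hlt)] at this
      linarith
  rw [← htangent, mul_div_cancel_left₀ _ hτ.ne', le_div_iff₀ hx]
  linarith

theorem sq_half_sub_le_choose_two_sub (n k : ℕ) :
    (n : ℝ) ^ 2 / 2 - (k + 1 / 2) * n ≤ (n - k).choose 2 := by
  rcases le_total k n with hkn | hnk
  · rw [Nat.cast_choose_two, Nat.cast_sub hkn]
    have : (0 : ℝ) ≤ k := k.cast_nonneg
    nlinarith
  · have hnk' : (n : ℝ) ≤ k := mod_cast hnk
    have : (0 : ℝ) ≤ n := n.cast_nonneg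
    simp only [Nat.sub_eq_zero_of_le hnk, Nat.choose_zero_succ, Nat.cast_zero]
    nlinarith

/-- The polynomial `φ` attached to the parameters `Δ` and `d`, as a real function: apart from the
constant `1`, each monomial stems from one of the five kinds of bad events, its coefficient being
the weight of that kind. -/
def badEventPoly (Δ d : ℕ) (x : ℝ) : ℝ :=
  1 + (Nat.choose Δ 13 * d ^ 15 : ℕ) * x ^ 14
    + (15 * d ^ 3 : ℕ) * x ^ 2
    + (2 ^ 7 * Δ ^ 3 * Nat.choose d 2 : ℕ) * x ^ 3
    + (2 ^ 12 * Δ ^ 4 * d * Nat.choose d 2 : ℕ) * x ^ 4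
    + (2 ^ 11 * Δ ^ 4 * d ^ 2 * Nat.choose d 2 : ℕ) * x ^ 5

theorem convexOn_badEventPoly (Δ d : ℕ) : ConvexOn ℝ (Ici 0) (badEventPoly Δ d) := by
  have monomial (w n : ℕ) : ConvexOn ℝ (Ici 0) fun x : ℝ ↦ (w : ℝ) * x ^ n :=
    (convexOn_pow n).smul w.cast_nonneg
  exact (((((convexOn_const 1 (convex_Ici 0)).add (monomial _ 14)).add (monomial _ 2)).add
    (monomial _ 3)).add (monomial _ 4)).add (monomial _ 5)

theorem differentiable_badEventPoly (Δ d : ℕ) : Differentiable ℝ (badEventPoly Δ d) := by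
  unfold badEventPoly
  fun_prop

theorem badEventPoly_div_le {Δ d : ℕ} (hΔ : 0 < Δ) (hd : 0 < d) {a : ℝ} (ha : 0 < a) :
    badEventPoly Δ d (a / (d * Δ)) / (a / (d * Δ)) ≤
      d * Δ / a + a ^ 13 / Nat.factorial 13 * d ^ 2 + 15 * a * d ^ 2 / Δ
        + (2 ^ 6 * a ^ 2 + 2 ^ 11 * a ^ 3) * Δ + 2 ^ 10 * a ^ 4 := by
  have hΔ' : (0 : ℝ) < Δ := mod_cast hΔ
  have hd' : (0 : ℝ) < d := mod_cast hd
  set x : ℝ := a / (d * Δ) with hx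
  have hx0 : 0 < x := div_pos ha (mul_pos hd' hΔ')
  have choose_thirteen_le : (Δ.choose 13 : ℝ) ≤ Δ ^ 13 / Nat.factorial 13 :=
    Nat.choose_le_pow_div 13 Δ
  have choose_two_le : (d.choose 2 : ℝ) ≤ d ^ 2 / 2 := Nat.choose_le_pow_div 2 d
  calc badEventPoly Δ d x / x
      = 1 / x + Δ.choose 13 * d ^ 15 * x ^ 13 + 15 * d ^ 3 * x
          + 2 ^ 7 * Δ ^ 3 * d.choose 2 * x ^ 2 + 2 ^ 12 * Δ ^ 4 * d * d.choose 2 * x ^ 3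
          + 2 ^ 11 * Δ ^ 4 * d ^ 2 * d.choose 2 * x ^ 4 := by
        simp only [badEventPoly, Nat.cast_mul, Nat.cast_pow, Nat.cast_ofNat]
        field_simp
    _ ≤ 1 / x + Δ ^ 13 / Nat.factorial 13 * d ^ 15 * x ^ 13 + 15 * d ^ 3 * x
          + 2 ^ 7 * Δ ^ 3 * (d ^ 2 / 2) * x ^ 2 + 2 ^ 12 * Δ ^ 4 * d * (d ^ 2 / 2) * x ^ 3
          + 2 ^ 11 * Δ ^ 4 * d ^ 2 * (d ^ 2 / 2) * x ^ 4 := by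
        gcongr
    _ = _ := by
        rw [hx]
        field_simp
        ring

theorem badEventPoly_div_lt {Δ d : ℕ} (hΔ : 10 ^ 9 ≤ Δ) (hd : (99 / 200 : ℝ) * Δ ≤ d) :
    badEventPoly Δ d (9 / 2 / (d * Δ)) / (9 / 2 / (d * Δ)) <
      ((d - 13).choose 2 : ℝ) - 3 * d := by
  have hΔ' : (10 : ℝ) ^ 9 ≤ Δ := mod_cast hΔ
  have hd₀ : (0 : ℝ) < d := by linarith
  have leading_term : (d * Δ / (9 / 2) : ℝ) ≤ 0.449 * d ^ 2 := by nlinarith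
  have choose_term : ((9 / 2) ^ 13 / Nat.factorial 13 * d ^ 2 : ℝ) ≤ 0.0499 * d ^ 2 := by
    gcongr
    norm_num [Nat.factorial]
  have small_term : (15 * (9 / 2) * d ^ 2 / Δ : ℝ) ≤ 0.0001 * d ^ 2 := by
    rw [div_le_iff₀ (by linarith)]
    nlinarith [sq_nonneg (d : ℝ)]
  calc badEventPoly Δ d (9 / 2 / (d * Δ)) / (9 / 2 / (d * Δ))
      ≤ d * Δ / (9 / 2) + (9 / 2) ^ 13 / Nat.factorial 13 * d ^ 2 + 15 * (9 / 2) * d ^ 2 / Δ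
          + (2 ^ 6 * (9 / 2) ^ 2 + 2 ^ 11 * (9 / 2) ^ 3) * Δ + 2 ^ 10 * (9 / 2) ^ 4 :=
        badEventPoly_div_le (by lia) (mod_cast hd₀) (by norm_num)
    _ ≤ 0.499 * d ^ 2 + (2 ^ 6 * (9 / 2) ^ 2 + 2 ^ 11 * (9 / 2) ^ 3) * Δ
          + 2 ^ 10 * (9 / 2) ^ 4 := by linarith
    _ < (d : ℝ) ^ 2 / 2 - ((13 : ℕ) + 1 / 2) * d - 3 * d := by push_cast; nlinarith
    _ ≤ ((d - 13).choose 2 : ℝ) - 3 * d := by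
        gcongr
        exact sq_half_sub_le_choose_two_sub d 13

theorem phi_tau_lt_s_general {Δ d : ℕ} (hΔ : 10 ^ 9 ≤ Δ) (hd : (99 / 200 : ℝ) * Δ ≤ d) {τ : ℝ}
    (hτ : 0 < τ) (htangent : τ * deriv (badEventPoly Δ d) τ = badEventPoly Δ d τ) :
    badEventPoly Δ d τ / τ < ((d - 13).choose 2 : ℝ) - 3 * d := by
  have hΔ₀ : (0 : ℝ) < Δ := by norm_cast; lia
  have hd₀ : (0 : ℝ) < d := by linarith
  have hx : (0 : ℝ) < 9 / 2 / (d * Δ) := div_pos (by norm_num) (mul_pos hd₀ hΔ₀)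
  exact (div_le_div_of_convexOn_of_mul_deriv_eq (convexOn_badEventPoly Δ d) hτ.le hx.le hτ hx
    (differentiable_badEventPoly Δ d τ).hasDerivAt.hasDerivWithinAt htangent).trans_lt
    (badEventPoly_div_lt hΔ hd)

/-- For every sufficiently small `ε > 0` there is `Δ₀` such that for all `Δ ≥ Δ₀`, setting
`d := ⌈(1/2 - ε)Δ⌉` and `φ(x) := 1 + w₁x^{14} + w₂x² + w₃x³ + w₄x⁴ + w₅x⁵` with the weights
coming from the five bad events, any positive `τ` with `τ φ'(τ) = φ(τ)` satisfies
`φ(τ)/τ < C(d-13, 2) - 3d`. -/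
theorem phi_tau_lt_s :
    ∃ ε₀ : ℝ, 0 < ε₀ ∧
      ∀ ε : ℝ, 0 < ε → ε < ε₀ →
        ∃ Δ₀ : ℕ, ∀ Δ : ℕ, Δ₀ ≤ Δ →
          ∀ d : ℕ, d = ⌈((1 : ℝ)/2 - ε) * (Δ : ℝ)⌉₊ →
            ∀ φ : ℝ → ℝ,
              (∀ x : ℝ, φ x = 1 + (Nat.choose Δ 13 * d ^ 15 : ℕ) * x ^ 14
                  + (15 * d ^ 3 : ℕ) * x ^ 2
                  + (2 ^ 7 * Δ ^ 3 * Nat.choose d 2 : ℕ) * x ^ 3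
                  + (2 ^ 12 * Δ ^ 4 * d * Nat.choose d 2 : ℕ) * x ^ 4
                  + (2 ^ 11 * Δ ^ 4 * d ^ 2 * Nat.choose d 2 : ℕ) * x ^ 5) →
              ∀ τ : ℝ, 0 < τ → τ * deriv φ τ = φ τ →
                φ τ / τ < (Nat.choose (d - 13) 2 : ℝ) - 3 * (d : ℝ) := by
  refine ⟨1 / 200, by norm_num, fun ε _ hε ↦ ⟨10 ^ 9, fun Δ hΔ d hd φ hφ τ hτ htangent ↦ ?_⟩⟩
  obtain rfl : φ = badEventPoly Δ d := funext hφ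
  have hd_ge : (99 / 200 : ℝ) * Δ ≤ d :=
    (mul_le_mul_of_nonneg_right (by linarith) Δ.cast_nonneg).trans (hd ▸ Nat.le_ceil _)
  exact phi_tau_lt_s_general hΔ hd_ge hτ htangent
end

section
/- For every integer t ≥ 0, the number of partial Dyck words with exactly t zeros in which every descent has length exactly 2 is at most 2 · 4^t. -/
/-- Every prefix of `w` has at least as many zeros (`false`) as ones (`true`). -/
def DyckPrefixCond (w : List Bool) : Prop :=
  ∀ p : List Bool, p <+: w → p.count true ≤ p.count false

/-- `MaxTrueRun w i m` means that the positions `i, i+1, …, i+m-1` of `w` form a maximal run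
of consecutive ones (`true`), i.e. a descent of length `m` starting at position `i`. -/
def MaxTrueRun (w : List Bool) (i m : ℕ) : Prop :=
  0 < m ∧ i + m ≤ w.length ∧
  (∀ j : ℕ, i ≤ j → j < i + m → w[j]? = some true) ∧
  (i = 0 ∨ w[i - 1]? = some false) ∧
  (i + m = w.length ∨ w[i + m]? = some false)

/-! A word with at most `t` zeros and at most `t` ones has length at most `2 * t`, and the binary
words of length at most `2 * t` number `1 + 2 + ⋯ + 2 ^ (2 * t) < 2 ^ (2 * t + 1) = 2 * 4 ^ t`. -/

section Words

variable {α : Type*} [Fintype α]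

theorem ncard_setOf_length_eq (n : ℕ) :
    {w : List α | w.length = n}.ncard = Fintype.card α ^ n :=
  (Nat.card_eq_fintype_card (α := List.Vector α n)).trans (card_vector n)

theorem ncard_setOf_length_lt (n : ℕ) :
    {w : List α | w.length < n}.ncard = ∑ k ∈ Finset.range n, Fintype.card α ^ k := by
  induction n with
  | zero => simp
  | succ n ih =>
    have split : {w : List α | w.length < n + 1} =
        {w | w.length < n} ∪ {w | w.length = n} :=
      Set.ext fun _ => Nat.lt_succ_iff_lt_or_eq
    have disjoint : Disjoint {w : List α | w.length < n} {w | w.length = n} :=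
      Set.disjoint_left.mpr fun _ hlt heq => hlt.ne heq
    rw [split, Set.ncard_union_eq disjoint (List.finite_length_lt α n) (List.finite_length_eq α n),
      ih, ncard_setOf_length_eq, Finset.sum_range_succ]

theorem ncard_lt_card_pow_of_length_lt [Nontrivial α] {S : Set (List α)} {n : ℕ}
    (hS : ∀ w ∈ S, w.length < n) : S.ncard < Fintype.card α ^ n :=
  calc
    S.ncard ≤ {w : List α | w.length < n}.ncard :=
      Set.ncard_le_ncard hS (List.finite_length_lt α n)
    _ = ∑ k ∈ Finset.range n, Fintype.card α ^ k := ncard_setOf_length_lt n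
    _ < Fintype.card α ^ n :=
      Nat.geomSum_lt Fintype.one_lt_card fun _ => Finset.mem_range.mp

end Words

theorem count_partial_dyck_descents_two_general (t : ℕ) {S : Set (List Bool)}
    (hS : ∀ w ∈ S, w.count false ≤ t ∧ w.count true ≤ t) : S.ncard < 2 * 4 ^ t := by
  have length_lt : ∀ w ∈ S, w.length < 2 * t + 1 := fun w hw => by
    have := hS w hw
    have := w.count_true_add_count_false
    omega
  calc
    S.ncard < Fintype.card Bool ^ (2 * t + 1) := ncard_lt_card_pow_of_length_lt length_lt
    _ = 2 * 4 ^ t := by rw [Fintype.card_bool, pow_succ', pow_mul]; norm_num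

/-- For every `t ≥ 0`, the number of partial Dyck words with exactly `t` zeros in which every
descent has length exactly `2` is at most `2 · 4^t`. -/
theorem count_partial_dyck_descents_two (t : ℕ) :
    Set.ncard {w : List Bool |
        w.count false = t ∧ w.count true ≤ t ∧ DyckPrefixCond w ∧
        (∀ i m : ℕ, MaxTrueRun w i m → m = 2)} ≤ 2 * 4 ^ t :=
  le_of_lt <| count_partial_dyck_descents_two_general t
    fun _ ⟨zeros, ones, _⟩ => ⟨zeros.le, ones⟩
end

section
/- For every sufficiently small real ε > 0 there exists an integer Δ₀ such that for every integer Δ ≥ Δ₀ the following holds. Set d := ⌈(1/2 − ε)Δ⌉, s := C(d−13, 2) − 3d, w₁ := C(Δ,13)·d^{15}, w₂ := 15·d³, w₃ := 2⁷·Δ³·C(d,2), w₄ := 2^{12}·Δ⁴·d·C(d,2), w₅ := 2^{11}·Δ⁴·d²·C(d,2). For each integer t ≥ 1, let C_t be the number of pairs (W, f), where W is a Dyck word of semilength t all of whose descents have length in {2, 3, 4, 5, 14}, and f assigns to each descent of W of length 2, 3, 4, 5, 14 an integer in {1,…,w₂}, {1,…,w₃}, {1,…,w₄}, {1,…,w₅},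 {1,…,w₁}, respectively. Then C_t / s^t tends to 0 as t tends to infinity. -/
/-- A Dyck word of semilength `m`: exactly `m` zeros, exactly `m` ones, and every prefix has
at least as many zeros as ones. -/
def IsDyckWord (m : ℕ) (w : List Bool) : Prop :=
  w.count false = m ∧ w.count true = m ∧ DyckPrefixCond w

/-!
Cut a Dyck word of semilength `t` before each zero: it becomes a sequence of `t` blocks `0 1^l`
whose lengths `l` add up to `t`. Forgetting the prefix condition, `C_t` is at most the coefficient
of `u ^ t` in `φ(u) ^ t`, where `φ(u) = 1 + ∑ l, weight l * u ^ l`, so `C_t * u ^ t ≤ φ(u) ^ t`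
for every `u > 0`, and it suffices to find a `u` with `φ(u) < s * u`.

Take `u = x / d ^ 2` and let `Δ ≤ ρ * d`. As `d → ∞`, the terms of `φ(u)` with `l = 2, 3, 4, 5` tend
to `0`, the term with `l = 14` is at most `ρ ^ 13 * x ^ 14 / 13!`, and `s * u` tends to `x / 2`. So
any `x` with `1 + ρ ^ 13 * x ^ 14 / 13! < x / 2` will do; `x = 11 / 5`, close to
the minimiser of `(1 + 2 ^ 13 * x ^ 14 / 13!) / x`, satisfies this for `ρ = 2`, and still does for
`ρ` slightly larger than `2`.
-/

open Filter Finset Topology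

section Runs

variable {u w : List Bool} {i l m : ℕ}

lemma MaxTrueRun.getElem?_eq_some_true (h : MaxTrueRun w i m) : w[i]? = some true := by
  obtain ⟨hm, -, hrun, -⟩ := h
  exact hrun i le_rfl (by omega)

lemma maxTrueRun_append_right_iff (hw : w[0]? ≠ some true) :
    MaxTrueRun (u ++ w) (u.length + i) m ↔ MaxTrueRun w i m := by
  have hget (j : ℕ) : (u ++ w)[u.length + j]? = w[j]? := by
    rw [List.getElem?_append_right (by omega), Nat.add_sub_cancel_left]
  rcases i with - | i
  · exact ⟨fun h => absurd (hget 0 ▸ h.getElem?_eq_some_true) hw,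
      fun h => absurd h.getElem?_eq_some_true hw⟩
  have hrun : (∀ j, u.length + (i + 1) ≤ j → j < u.length + (i + 1) + m →
      (u ++ w)[j]? = some true) ↔ ∀ j, i + 1 ≤ j → j < i + 1 + m → w[j]? = some true := by
    refine ⟨fun h j hij hjm => hget j ▸ h (u.length + j) (by omega) (by omega),
      fun h j hij hjm => ?_⟩
    obtain ⟨k, rfl⟩ := Nat.exists_eq_add_of_le (show u.length ≤ j by omega)
    exact hget k ▸ h k (by omega) (by omega)
  refine and_congr Iff.rfl (and_congr ?_ (and_congr hrun (and_congr ?_ ?_)))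
  · rw [List.length_append]
    omega
  · rw [show u.length + (i + 1) - 1 = u.length + i from rfl, hget]
    simp
  · rw [List.length_append, add_assoc, hget, Nat.add_left_cancel_iff]

lemma maxTrueRun_cons_replicate_append (hl : 0 < l) (hw : w[0]? ≠ some true) :
    MaxTrueRun (false :: List.replicate l true ++ w) 1 l := by
  refine ⟨hl, by simp; omega, fun j h1j hjl => ?_, Or.inr rfl, ?_⟩
  · obtain ⟨k, rfl⟩ := Nat.exists_eq_add_of_le' h1j
    simp [List.getElem?_append, show k < l by omega]
  · rcases w with - | ⟨- | -, w⟩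
    · simp [add_comm]
    · simp [add_comm 1 l]
    · simp at hw

lemma DyckPrefixCond.getElem?_zero_ne (h : DyckPrefixCond w) : w[0]? ≠ some true := by
  rcases w with - | ⟨- | -, w⟩
  · simp
  · simp
  · simpa using h [true] ⟨w, rfl⟩

end Runs

section BlockWord

/-- The word `0 1^l₁ 0 1^l₂ ⋯ 0 1^lₙ`; a block with `lᵢ = 0` contributes no descent. -/
def blockWord (ls : List ℕ) : List Bool :=
  ls.flatMap fun l => false :: List.replicate l true

lemma blockWord_cons (l : ℕ) (ls : List ℕ) :
    blockWord (l :: ls) = false :: List.replicate l true ++ blockWord ls :=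
  List.flatMap_cons

lemma blockWord_getElem?_zero_ne (ls : List ℕ) : (blockWord ls)[0]? ≠ some true := by
  cases ls <;> simp [blockWord]

lemma count_false_blockWord (ls : List ℕ) : (blockWord ls).count false = ls.length := by
  induction ls with
  | nil => rfl
  | cons l ls ih => simp [blockWord_cons, ih, List.count_replicate]

lemma count_true_blockWord (ls : List ℕ) : (blockWord ls).count true = ls.sum := by
  induction ls with
  | nil => rfl
  | cons l ls ih => simp [blockWord_cons, ih]

lemma exists_eq_replicate_append_blockWord (w : List Bool) :
    ∃ l ls, w = List.replicate l true ++ blockWord ls := by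
  induction w with
  | nil => exact ⟨0, [], rfl⟩
  | cons b w ih =>
    obtain ⟨l, ls, rfl⟩ := ih
    cases b with
    | false => exact ⟨0, l :: ls, (blockWord_cons l ls).symm⟩
    | true => exact ⟨l + 1, ls, rfl⟩

lemma exists_eq_blockWord {w : List Bool} (hw : w[0]? ≠ some true) : ∃ ls, w = blockWord ls := by
  obtain ⟨- | l, ls, rfl⟩ := exists_eq_replicate_append_blockWord w
  · exact ⟨ls, rfl⟩
  · simp [List.replicate_succ] at hw

end BlockWord

section DescentLabelling

/-- `f` labels the descents of `w`: all descents have length in `A`, a descent of length `l`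
carries a label in `{1, …, weight l}` at its starting position, and `f` vanishes elsewhere. -/
def IsDescentLabelling (A : Set ℕ) (weight : ℕ → ℕ) (w : List Bool) (f : ℕ → ℕ) : Prop :=
  (∀ i l : ℕ, MaxTrueRun w i l → l ∈ A) ∧
  (∀ i l : ℕ, MaxTrueRun w i l → f i ∈ Icc 1 (weight l)) ∧
  (∀ i : ℕ, (¬ ∃ l : ℕ, MaxTrueRun w i l) → f i = 0)

/-- The weighted Dyck words of semilength `t`: pairs of a Dyck word and a labelling of its
descents, with descent lengths in `A` and `weight l` labels available for a descent of length `l`.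
-/
def weightedDyckWords (A : Set ℕ) (weight : ℕ → ℕ) (t : ℕ) : Set (List Bool × (ℕ → ℕ)) :=
  {p | IsDyckWord t p.1 ∧ IsDescentLabelling A weight p.1 p.2}

/-- The labelled blocks `0 1^l`, encoded as pairs of `l` and a label: the block `0` has the dummy
label `0`, and a block ending in a descent of length `l ∈ A` has a label in `{1, …, weight l}`. -/
def labelledBlocks (A : Finset ℕ) (weight : ℕ → ℕ) : Finset (Σ _ : ℕ, ℕ) :=
  insert ⟨0, 0⟩ (A.sigma fun l => Icc 1 (weight l))

/-- The labels of a sequence of labelled blocks, listed along the positions of its block word: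
each label sits at position `1` of its block, where the descent starts, among zeros. (For the
block `0`, `List.set` is out of range and does nothing.) -/
def blockLabels (L : List (Σ _ : ℕ, ℕ)) : List ℕ :=
  L.flatMap fun b => (List.replicate (b.1 + 1) 0).set 1 b.2

lemma blockLabels_cons (l c : ℕ) (L : List (Σ _ : ℕ, ℕ)) :
    blockLabels (⟨l, c⟩ :: L) = (List.replicate (l + 1) 0).set 1 c ++ blockLabels L :=
  List.flatMap_cons

variable {A : Set ℕ} {weight f : ℕ → ℕ} {u w : List Bool} {i l : ℕ}

lemma IsDescentLabelling.apply_eq_zero (h : IsDescentLabelling A weight w f)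
    (hi : w[i]? ≠ some true) : f i = 0 :=
  h.2.2 i fun ⟨_, hrun⟩ => hi hrun.getElem?_eq_some_true

lemma IsDescentLabelling.apply_succ_eq_zero (h : IsDescentLabelling A weight w f)
    (hi : w[i]? ≠ some false) : f (i + 1) = 0 :=
  h.2.2 (i + 1) fun ⟨_, _, _, _, hprev, _⟩ => hi (hprev.resolve_left i.succ_ne_zero)

lemma IsDescentLabelling.of_append (h : IsDescentLabelling A weight (u ++ w) f)
    (hw : w[0]? ≠ some true) : IsDescentLabelling A weight w fun i => f (u.length + i) := by
  obtain ⟨hlen, hlab, hzero⟩ := h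
  simp only [IsDescentLabelling, ← maxTrueRun_append_right_iff (u := u) hw]
  exact ⟨fun i => hlen _, fun i => hlab _, fun i => hzero _⟩

lemma IsDescentLabelling.head_mem_labelledBlocks {A : Finset ℕ}
    (h : IsDescentLabelling A weight (false :: List.replicate l true ++ w) f)
    (hw : w[0]? ≠ some true) : ⟨l, f 1⟩ ∈ labelledBlocks A weight := by
  rcases l.eq_zero_or_pos with rfl | hl
  · simp [labelledBlocks, h.apply_eq_zero (i := 1) (by simpa using hw)]
  · have hrun := maxTrueRun_cons_replicate_append hl hw
    exact mem_insert_of_mem (mem_sigma.2 ⟨h.1 1 l hrun, h.2.1 1 l hrun⟩)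

lemma IsDescentLabelling.getD_set_replicate
    (h : IsDescentLabelling A weight (false :: List.replicate l true ++ w) f) (hi : i ≤ l) :
    ((List.replicate (l + 1) 0).set 1 (f 1)).getD i 0 = f i := by
  rcases i with - | - | k
  · simp [h.apply_eq_zero (i := 0) (by simp)]
  · simp [show 0 < l by omega]
  · have hzero : f (k + 1 + 1) = 0 :=
      h.apply_succ_eq_zero (by simp [List.getElem?_append, show k < l by omega])
    simp [hzero]

lemma IsDescentLabelling.exists_labelledBlocks {A : Finset ℕ} {ls : List ℕ}
    (h : IsDescentLabelling A weight (blockWord ls) f) :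
    ∃ L : List (Σ _ : ℕ, ℕ), (∀ b ∈ L, b ∈ labelledBlocks A weight) ∧
      L.map Sigma.fst = ls ∧ (fun i => (blockLabels L).getD i 0) = f := by
  induction ls generalizing f with
  | nil => exact ⟨[], by simp, rfl, funext fun i => (h.apply_eq_zero (by simp [blockWord])).symm⟩
  | cons l ls ih =>
    rw [blockWord_cons] at h
    have hls := blockWord_getElem?_zero_ne ls
    obtain ⟨L, hL, rfl, hf⟩ := ih (h.of_append hls)
    refine ⟨⟨l, f 1⟩ :: L, List.forall_mem_cons.2 ⟨h.head_mem_labelledBlocks hls, hL⟩, rfl, ?_⟩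
    funext i
    have hlen : ((List.replicate (l + 1) 0).set 1 (f 1)).length = l + 1 := by simp
    rw [blockLabels_cons]
    rcases le_or_gt i l with hi | hi
    · rw [List.getD_append _ _ _ _ (by omega), h.getD_set_replicate hi]
    · obtain ⟨j, rfl⟩ := Nat.exists_eq_add_of_le (Nat.succ_le_of_lt hi)
      rw [List.getD_append_right _ _ _ _ (by omega), hlen, Nat.add_sub_cancel_left]
      simpa using congrFun hf j

end DescentLabelling

section Counting

lemma card_filter_piFinset_mul_pow_le {ι κ R : Type*} [Fintype κ] [DecidableEq κ] [CommSemiring R]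
    [PartialOrder R] [IsOrderedRing R] (s : Finset ι) (size : ι → ℕ) (n : ℕ) {x : R}
    (hx : 0 ≤ x) :
    (#{v ∈ Fintype.piFinset fun _ : κ => s | ∑ j, size (v j) = n} : R) * x ^ n ≤
      (∑ b ∈ s, x ^ size b) ^ Fintype.card κ := by
  calc (#{v ∈ Fintype.piFinset fun _ : κ => s | ∑ j, size (v j) = n} : R) * x ^ n
      = ∑ v ∈ Fintype.piFinset (fun _ : κ => s) with ∑ j, size (v j) = n,
          ∏ j, x ^ size (v j) := by
        rw [← nsmul_eq_mul, ← sum_const]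
        refine sum_congr rfl fun v hv => ?_
        rw [prod_pow_eq_pow_sum, (mem_filter.1 hv).2]
    _ ≤ ∑ v ∈ Fintype.piFinset fun _ : κ => s, ∏ j, x ^ size (v j) :=
        sum_le_sum_of_subset_of_nonneg (filter_subset _ _) fun _ _ _ =>
          prod_nonneg fun _ _ => pow_nonneg hx _
    _ = (∑ b ∈ s, x ^ size b) ^ Fintype.card κ := by
        rw [← prod_univ_sum (fun _ => s) fun _ b => x ^ size b, prod_const, card_univ]

lemma sum_labelledBlocks_pow {R : Type*} [CommSemiring R] (A : Finset ℕ) (weight : ℕ → ℕ)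
    (x : R) :
    ∑ b ∈ labelledBlocks A weight, x ^ b.1 = 1 + ∑ l ∈ A, weight l * x ^ l := by
  rw [labelledBlocks, sum_insert (by simp), sum_sigma]
  simp

lemma weightedDyckWords_subset_image (A : Finset ℕ) (weight : ℕ → ℕ) (t : ℕ) :
    weightedDyckWords A weight t ⊆
      (fun v : Fin t → Σ _ : ℕ, ℕ => (blockWord ((List.ofFn v).map Sigma.fst),
        fun i => (blockLabels (List.ofFn v)).getD i 0)) ''
      ({v ∈ Fintype.piFinset fun _ => labelledBlocks A weight | ∑ j, (v j).1 = t} :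
        Finset (Fin t → Σ _ : ℕ, ℕ)) := by
  rintro ⟨w, f⟩ ⟨⟨hfalse, htrue, hpre⟩, hf⟩
  obtain ⟨ls, rfl⟩ := exists_eq_blockWord hpre.getElem?_zero_ne
  obtain ⟨L, hL, rfl, rfl⟩ := hf.exists_labelledBlocks
  rw [count_false_blockWord, List.length_map] at hfalse
  rw [count_true_blockWord] at htrue
  subst hfalse
  refine ⟨L.get, ?_, by simp only [List.ofFn_get]⟩
  refine mem_coe.2 (mem_filter.2 ⟨Fintype.mem_piFinset.2 fun j => hL _ (L.get_mem j), ?_⟩)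
  exact (Fin.sum_univ_fun_getElem L Sigma.fst).trans htrue

lemma ncard_weightedDyckWords_mul_pow_le {R : Type*} [CommSemiring R] [PartialOrder R]
    [IsOrderedRing R] (A : Finset ℕ) (weight : ℕ → ℕ) (t : ℕ) {x : R} (hx : 0 ≤ x) :
    ((weightedDyckWords A weight t).ncard : R) * x ^ t ≤
      (1 + ∑ l ∈ A, weight l * x ^ l) ^ t := by
  have hcard := (Set.ncard_le_ncard (weightedDyckWords_subset_image A weight t)
    ((finite_toSet _).image _)).trans (Set.ncard_image_le (finite_toSet _))
  rw [Set.ncard_coe_finset] at hcard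
  calc ((weightedDyckWords A weight t).ncard : R) * x ^ t
      ≤ (#{v ∈ Fintype.piFinset fun _ : Fin t => labelledBlocks A weight |
          ∑ j, (v j).1 = t} : R) * x ^ t := by
        gcongr
    _ ≤ (∑ b ∈ labelledBlocks A weight, x ^ b.1) ^ Fintype.card (Fin t) :=
        card_filter_piFinset_mul_pow_le _ _ _ hx
    _ = (1 + ∑ l ∈ A, weight l * x ^ l) ^ t := by
        rw [sum_labelledBlocks_pow, Fintype.card_fin]

end Counting

section Growth

lemma tendsto_div_pow_atTop_nhds_zero_of_mul_pow_le {a : ℕ → ℝ} {x φ s : ℝ} (ha : ∀ t, 0 ≤ a t)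
    (hx : 0 < x) (hle : ∀ t, a t * x ^ t ≤ φ ^ t) (hlt : φ < s * x) :
    Tendsto (fun t => a t / s ^ t) atTop (𝓝 0) := by
  have hφ : 0 ≤ φ := by simpa using (mul_nonneg (ha 1) (pow_nonneg hx.le 1)).trans (hle 1)
  have hsx : 0 < s * x := hφ.trans_lt hlt
  have hs : 0 < s := pos_of_mul_pos_left hsx hx.le
  refine squeeze_zero (g := fun t => (φ / (s * x)) ^ t)
    (fun t => div_nonneg (ha t) (pow_nonneg hs.le t)) (fun t => ?_)
    (tendsto_pow_atTop_nhds_zero_of_lt_one (div_nonneg hφ hsx.le) ((div_lt_one hsx).2 hlt))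
  calc a t / s ^ t = a t * x ^ t / (s * x) ^ t := by rw [mul_pow]; field_simp
    _ ≤ φ ^ t / (s * x) ^ t := by gcongr; exact hle t
    _ = (φ / (s * x)) ^ t := (div_pow _ _ _).symm

theorem tendsto_ncard_weightedDyckWords_div_pow {A : Finset ℕ} {weight : ℕ → ℕ} {x s : ℝ}
    (hx : 0 < x) (hlt : 1 + ∑ l ∈ A, weight l * x ^ l < s * x) :
    Tendsto (fun t => ((weightedDyckWords A weight t).ncard : ℝ) / s ^ t) atTop (𝓝 0) :=
  tendsto_div_pow_atTop_nhds_zero_of_mul_pow_le (fun _ => Nat.cast_nonneg _) hx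
    (fun t => ncard_weightedDyckWords_mul_pow_le A weight t hx.le) hlt

end Growth

section Weights

variable {Δ d : ℕ} {ρ x : ℝ}

lemma choose_two_le_sq_div_two (d : ℕ) : (d.choose 2 : ℝ) ≤ d ^ 2 / 2 := by
  simpa using Nat.choose_le_pow_div (α := ℝ) 2 d

lemma weight_two_mul_pow_eq :
    (15 * d ^ 3 * (x / d ^ 2) ^ 2 : ℝ) = 15 * x ^ 2 / d := by
  field_simp

lemma weight_three_mul_pow_le (hΔ : Δ ≤ ρ * d) (hx : 0 ≤ x) :
    (2 ^ 7 * Δ ^ 3 * d.choose 2 * (x / d ^ 2) ^ 3 : ℝ) ≤ 2 ^ 6 * ρ ^ 3 * x ^ 3 / d := by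
  have hρd : 0 ≤ ρ * d := Δ.cast_nonneg.trans hΔ
  calc 2 ^ 7 * (Δ : ℝ) ^ 3 * d.choose 2 * (x / d ^ 2) ^ 3
      ≤ 2 ^ 7 * (ρ * d) ^ 3 * (d ^ 2 / 2) * (x / d ^ 2) ^ 3 := by
        gcongr
        exact choose_two_le_sq_div_two d
    _ = 2 ^ 6 * ρ ^ 3 * x ^ 3 / d := by field_simp

lemma weight_four_mul_pow_le (hΔ : Δ ≤ ρ * d) :
    (2 ^ 12 * Δ ^ 4 * d * d.choose 2 * (x / d ^ 2) ^ 4 : ℝ) ≤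
      2 ^ 11 * ρ ^ 4 * x ^ 4 / d := by
  calc 2 ^ 12 * (Δ : ℝ) ^ 4 * d * d.choose 2 * (x / d ^ 2) ^ 4
      ≤ 2 ^ 12 * (ρ * d) ^ 4 * d * (d ^ 2 / 2) * (x / d ^ 2) ^ 4 := by
        gcongr
        exact choose_two_le_sq_div_two d
    _ = 2 ^ 11 * ρ ^ 4 * x ^ 4 / d := by field_simp

lemma weight_five_mul_pow_le (hΔ : Δ ≤ ρ * d) (hx : 0 ≤ x) :
    (2 ^ 11 * Δ ^ 4 * d ^ 2 * d.choose 2 * (x / d ^ 2) ^ 5 : ℝ) ≤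
      2 ^ 10 * ρ ^ 4 * x ^ 5 / d ^ 2 := by
  calc 2 ^ 11 * (Δ : ℝ) ^ 4 * d ^ 2 * d.choose 2 * (x / d ^ 2) ^ 5
      ≤ 2 ^ 11 * (ρ * d) ^ 4 * d ^ 2 * (d ^ 2 / 2) * (x / d ^ 2) ^ 5 := by
        gcongr
        exact choose_two_le_sq_div_two d
    _ = 2 ^ 10 * ρ ^ 4 * x ^ 5 / d ^ 2 := by field_simp

lemma weight_fourteen_mul_pow_le (hd : 0 < d) (hΔ : Δ ≤ ρ * d) :
    (Δ.choose 13 * d ^ 15 * (x / d ^ 2) ^ 14 : ℝ) ≤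
      ρ ^ 13 * x ^ 14 / Nat.factorial 13 := by
  calc (Δ.choose 13 : ℝ) * d ^ 15 * (x / d ^ 2) ^ 14
      ≤ (ρ * d) ^ 13 / Nat.factorial 13 * d ^ 15 * (x / d ^ 2) ^ 14 := by
        gcongr
        exact (Nat.choose_le_pow_div 13 Δ).trans (by gcongr)
    _ = ρ ^ 13 * x ^ 14 / Nat.factorial 13 := by field_simp

lemma half_sub_le_choose_two_sub_mul_div_sq (hd : 13 ≤ d) (hx : 0 ≤ x) :
    x / 2 - 33 / 2 * x / d ≤ ((d - 13).choose 2 - 3 * d : ℝ) * (x / d ^ 2) := by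
  have : 0 < d := by omega
  calc x / 2 - 33 / 2 * x / d = (d ^ 2 / 2 - 27 / 2 * d - 3 * d) * (x / d ^ 2) := by
        field_simp
        ring
    _ ≤ ((d - 13).choose 2 - 3 * d : ℝ) * (x / d ^ 2) := by
        gcongr
        rw [Nat.cast_choose_two, Nat.cast_sub hd]
        push_cast
        linarith

lemma eventually_one_add_sum_weight_lt
    (hρx : 1 + ρ ^ 13 * x ^ 14 / Nat.factorial 13 < x / 2) :
    ∀ᶠ d : ℕ in atTop,
      1 + (15 * x ^ 2 / d + (2 ^ 6 * ρ ^ 3 * x ^ 3 / d + (2 ^ 11 * ρ ^ 4 * x ^ 4 / d +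
        (2 ^ 10 * ρ ^ 4 * x ^ 5 / d ^ 2 + ρ ^ 13 * x ^ 14 / Nat.factorial 13)))) <
      x / 2 - 33 / 2 * x / d := by
  have hinv (c : ℝ) := tendsto_const_div_atTop_nhds_zero_nat c
  have hinvsq (c : ℝ) : Tendsto (fun d : ℕ => c / (d : ℝ) ^ 2) atTop (𝓝 0) :=
    (tendsto_const_div_pow c 2 two_ne_zero).comp tendsto_natCast_atTop_atTop
  refine Tendsto.eventually_lt (((hinv _).add ((hinv _).add ((hinv _).add ((hinvsq _).add
    tendsto_const_nhds)))).const_add 1) ((hinv _).const_sub _) ?_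
  simpa using hρx

theorem weighted_dyck_count_little_o_general
    (hρx : 1 + ρ ^ 13 * x ^ 14 / Nat.factorial 13 < x / 2) :
    ∀ᶠ d : ℕ in atTop, ∀ Δ : ℕ, Δ ≤ ρ * d → ∀ weight : ℕ → ℕ,
      weight 2 = 15 * d ^ 3 →
      weight 3 = 2 ^ 7 * Δ ^ 3 * Nat.choose d 2 →
      weight 4 = 2 ^ 12 * Δ ^ 4 * d * Nat.choose d 2 →
      weight 5 = 2 ^ 11 * Δ ^ 4 * d ^ 2 * Nat.choose d 2 →
      weight 14 = Nat.choose Δ 13 * d ^ 15 →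
      Tendsto (fun t => ((weightedDyckWords {2, 3, 4, 5, 14} weight t).ncard : ℝ) /
        ((Nat.choose (d - 13) 2 : ℝ) - 3 * (d : ℝ)) ^ t) atTop (𝓝 0) := by
  filter_upwards [eventually_one_add_sum_weight_lt hρx, eventually_ge_atTop 13]
    with d hlt hd13 Δ hΔ weight h2 h3 h4 h5 h14
  have hd : 0 < d := by omega
  have hρ : 0 ≤ ρ := nonneg_of_mul_nonneg_left (Δ.cast_nonneg.trans hΔ) (Nat.cast_pos.2 hd)
  have hx : 0 < x := by
    have : 0 ≤ ρ ^ 13 * x ^ 14 / Nat.factorial 13 := by positivity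
    linarith
  suffices h : 1 + ∑ l ∈ ({2, 3, 4, 5, 14} : Finset ℕ), weight l * (x / d ^ 2) ^ l <
      ((d - 13).choose 2 - 3 * d : ℝ) * (x / d ^ 2) by
    simpa using tendsto_ncard_weightedDyckWords_div_pow (by positivity) h
  refine lt_of_le_of_lt ?_ (hlt.trans_le (half_sub_le_choose_two_sub_mul_div_sq hd13 hx.le))
  iterate 4 rw [sum_insert (by decide)]
  rw [sum_singleton, h2, h3, h4, h5, h14]
  simp only [Nat.cast_mul, Nat.cast_pow, Nat.cast_ofNat]
  gcongr
  · exact weight_two_mul_pow_eq.le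
  · exact weight_three_mul_pow_le hΔ hx.le
  · exact weight_four_mul_pow_le hΔ
  · exact weight_five_mul_pow_le hΔ hx.le
  · exact weight_fourteen_mul_pow_le hd hΔ

end Weights

/-- For every sufficiently small `ε > 0` there is `Δ₀` such that for every `Δ ≥ Δ₀`, with
`d := ⌈(1/2 - ε)Δ⌉` and `s := C(d-13, 2) - 3d`, the number `C_t` of weighted Dyck words of
semilength `t` with descent lengths in `{2, 3, 4, 5, 14}`, each descent of length
`2, 3, 4, 5, 14` carrying a weight in `{1, …, w₂}, {1, …, w₃}, {1, …, w₄}, {1, …, w₅},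
{1, …, w₁}` respectively (descents are identified with their starting positions, weights are
`0` elsewhere), satisfies `C_t / s^t → 0` as `t → ∞`. -/
theorem weighted_dyck_count_little_o :
    ∃ ε₀ : ℝ, 0 < ε₀ ∧
      ∀ ε : ℝ, 0 < ε → ε < ε₀ →
        ∃ Δ₀ : ℕ, ∀ Δ : ℕ, Δ₀ ≤ Δ →
          ∀ d : ℕ, d = ⌈((1 : ℝ)/2 - ε) * (Δ : ℝ)⌉₊ →
            ∀ weight : ℕ → ℕ,
              weight 2 = 15 * d ^ 3 →
              weight 3 = 2 ^ 7 * Δ ^ 3 * Nat.choose d 2 →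
              weight 4 = 2 ^ 12 * Δ ^ 4 * d * Nat.choose d 2 →
              weight 5 = 2 ^ 11 * Δ ^ 4 * d ^ 2 * Nat.choose d 2 →
              weight 14 = Nat.choose Δ 13 * d ^ 15 →
              ∀ C : ℕ → ℕ,
                (∀ t : ℕ, C t = Set.ncard {p : List Bool × (ℕ → ℕ) |
                    IsDyckWord t p.1 ∧
                    (∀ i l : ℕ, MaxTrueRun p.1 i l → l ∈ ({2, 3, 4, 5, 14} : Set ℕ)) ∧
                    (∀ i l : ℕ, MaxTrueRun p.1 i l → p.2 i ∈ Finset.Icc 1 (weight l)) ∧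
                    (∀ i : ℕ, (¬ ∃ l : ℕ, MaxTrueRun p.1 i l) → p.2 i = 0)}) →
                Filter.Tendsto
                  (fun t : ℕ => (C t : ℝ) /
                    ((Nat.choose (d - 13) 2 : ℝ) - 3 * (d : ℝ)) ^ t)
                  Filter.atTop (nhds 0) := by
  obtain ⟨d₀, hd₀⟩ := eventually_atTop.1 (weighted_dyck_count_little_o_general
    (ρ := 200 / 99) (x := 11 / 5) (by norm_num [Nat.factorial]))
  refine ⟨1 / 200, by norm_num, fun ε _ hε => ⟨3 * d₀, ?_⟩⟩
  intro Δ hΔ d hd weight h2 h3 h4 h5 h14 C hC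
  have hΔd : 99 / 200 * (Δ : ℝ) ≤ d :=
    calc 99 / 200 * (Δ : ℝ) ≤ (1 / 2 - ε) * Δ := by gcongr; linarith
      _ ≤ d := hd ▸ Nat.le_ceil _
  have hd₀d : d₀ ≤ d := by
    have : (3 * d₀ : ℝ) ≤ Δ := by exact_mod_cast hΔ
    exact_mod_cast (by linarith : (d₀ : ℝ) ≤ d)
  simp only [hC]
  exact hd₀ d hd₀d Δ (by linarith) weight h2 h3 h4 h5 h14
end
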